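/- For every p ∈ [0,1] there exists a nonnegative random time T that is an unbiased shift of B embedding the Dirac measure δ₀ and satisfies P₀{T = 0} = p. -/

import Mathlib

open MeasureTheory ProbabilityTheory

/-- A two-sided standard Brownian motion: a.s. continuous paths, `B₀ = 0`, independent
increments, and `B_t − B_s` centered Gaussian with variance `t − s` for `s < t`. -/
structure IsTwoSidedBM {Ω : Type*} [MeasurableSpace Ω] (P : Measure Ω) (B : ℝ → Ω → ℝ) :
    Prop where
  aemeas : ∀ t : ℝ, AEMeasurable (B t) P
  cont : ∀ᵐ ω ∂P, Continuous fun t => B t ω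
  zero : ∀ᵐ ω ∂P, B 0 ω = 0
  indepIncr : ∀ (n : ℕ) (t : Fin (n + 1) → ℝ), Monotone t →
    iIndepFun (m := fun _ => inferInstance)
      (fun (i : Fin n) ω => B (t i.succ) ω - B (t i.castSucc) ω) P
  gaussIncr : ∀ s t : ℝ, s < t →
    Measure.map (fun ω => B t ω - B s ω) P = gaussianReal 0 (Real.toNNReal (t - s))

/-- A random time: a measurable function of the path of `B`. -/
def IsRandomTime {Ω : Type*} [MeasurableSpace Ω] (B : ℝ → Ω → ℝ) (T : Ω → ℝ) : Prop :=
  @Measurable Ω ℝ (MeasurableSpace.comap (fun ω (t : ℝ) => B t ω) inferInstance) _ T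

/-- An unbiased shift: a random time `T` such that `(B_{T+t} − B_T)_{t∈ℝ}` is a two-sided
Brownian motion independent of `B_T`. -/
def IsUnbiasedShift {Ω : Type*} [MeasurableSpace Ω] (P : Measure Ω) (B : ℝ → Ω → ℝ)
    (T : Ω → ℝ) : Prop :=
  IsRandomTime B T ∧
  IsTwoSidedBM P (fun t ω => B (T ω + t) ω - B (T ω) ω) ∧
  IndepFun (fun ω (t : ℝ) => B (T ω + t) ω - B (T ω) ω) (fun ω => B (T ω) ω) P

/-- `T` embeds the distribution `ν`: `B_T` has law `ν`. -/
def Embeds {Ω : Type*} [MeasurableSpace Ω] (P : Measure Ω) (B : ℝ → Ω → ℝ) (T : Ω → ℝ)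
    (ν : Measure ℝ) : Prop :=
  Measure.map (fun ω => B (T ω) ω) P = ν

/-- A stopping time with respect to the filtration `(σ(B_s : s ≤ t))_{t ≥ 0}`. -/
def IsBMStoppingTime {Ω : Type*} [MeasurableSpace Ω] (B : ℝ → Ω → ℝ) (T : Ω → ℝ) : Prop :=
  ∀ t : ℝ, 0 ≤ t →
    MeasurableSet[⨆ s ∈ Set.Iic t, MeasurableSpace.comap (B s) inferInstance] {ω | T ω ≤ t}

section UShiftProof
open Filter Topology Set
open scoped ENNReal NNReal

namespace UShift


section induced
variable {X : Type*} [MeasurableSpace X]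

open Classical in
noncomputable def retTime (S : X → X) (D : Set X) (x : X) : ℕ :=
  if x ∈ D then sInf {k | 1 ≤ k ∧ S^[k] x ∈ D} else 0

lemma retTime_eq_succ (S : X → X) (D : Set X) (x : X) (k : ℕ) :
    retTime S D x = k + 1 ↔ x ∈ D ∧ S^[k+1] x ∈ D ∧ ∀ j < k, S^[j+1] x ∉ D := by
  unfold retTime
  constructor
  · intro h
    split_ifs at h with hx
    have hne : {k | 1 ≤ k ∧ S^[k] x ∈ D}.Nonempty := by
      by_contra hne
      rw [Set.not_nonempty_iff_eq_empty] at hne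
      simp [hne] at h
    have hm := Nat.sInf_mem hne
    rw [h] at hm
    refine ⟨hx, hm.2, fun j hj hjD => ?_⟩
    have := Nat.sInf_le (s := {k | 1 ≤ k ∧ S^[k] x ∈ D}) (m := j+1) ⟨by omega, hjD⟩
    omega
  · rintro ⟨hx, h1, h2⟩
    rw [if_pos hx]
    apply le_antisymm
    · exact Nat.sInf_le (s := {k | 1 ≤ k ∧ S^[k] x ∈ D}) (m := k+1) ⟨by omega, h1⟩
    · refine le_csInf (s := {k | 1 ≤ k ∧ S^[k] x ∈ D}) ⟨k+1, by omega, h1⟩ ?_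
      rintro b ⟨hb1, hb2⟩
      by_contra hlt
      obtain ⟨j, rfl⟩ : ∃ j, b = j + 1 := ⟨b - 1, by omega⟩
      exact h2 j (by omega) hb2

lemma measurableSet_retTime {S : X → X} (hS : Measurable S) {D : Set X} (hD : MeasurableSet D)
    (k : ℕ) : MeasurableSet {x | retTime S D x = k + 1} := by
  have : {x | retTime S D x = k + 1}
      = D ∩ (S^[k+1] ⁻¹' D ∩ ⋂ j ∈ Finset.range k, (S^[j+1] ⁻¹' D)ᶜ) := by
    ext x; simp [retTime_eq_succ]; tauto
  rw [this]
  refine hD.inter (((hS.iterate _) hD).inter ?_)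
  exact Finset.measurableSet_biInter _ fun j _ => ((hS.iterate _) hD).compl

lemma measurable_retTime {S : X → X} (hS : Measurable S) {D : Set X} (hD : MeasurableSet D) :
    Measurable (retTime S D) := by
  refine measurable_to_countable' fun y => ?_
  rcases y with _ | k
  · have : retTime S D ⁻¹' {0} = (⋃ k, {x | retTime S D x = k + 1})ᶜ := by
      ext x
      simp only [mem_preimage, mem_singleton_iff, mem_compl_iff, mem_iUnion, mem_ofPred_eq,
        not_exists]
      constructor
      · intro h k; omega
      · intro h
        by_contra h0
        exact h (retTime S D x - 1) (by omega)
    rw [this]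
    exact (MeasurableSet.iUnion fun k => measurableSet_retTime hS hD k).compl
  · exact measurableSet_retTime hS hD k

lemma retTime_pos {μ : Measure X} [IsProbabilityMeasure μ] {S : X → X}
    (hS : MeasurePreserving S μ μ) {D : Set X} (hD : MeasurableSet D) :
    ∀ᵐ x ∂μ, x ∈ D → 0 < retTime S D x := by
  filter_upwards [hS.conservative.ae_mem_imp_frequently_image_mem hD.nullMeasurableSet] with x hx hxD
  obtain ⟨k, hk, hkD⟩ := (frequently_atTop.1 (hx hxD)) 1
  unfold retTime
  rw [if_pos hxD]
  have := Nat.sInf_mem (s := {k | 1 ≤ k ∧ S^[k] x ∈ D}) ⟨k, hk, hkD⟩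
  exact this.1

theorem induced_measurePreserving {μ : Measure X} [IsProbabilityMeasure μ] {S : X → X}
    (hS : MeasurePreserving S μ μ) {D : Set X} (hD : MeasurableSet D) :
    MeasurePreserving (fun x => S^[retTime S D x] x) μ μ := by
  have hm : Measurable (fun x => S^[retTime S D x] x) := by
    have h1 : Measurable (fun q : ℕ × X => S^[q.1] q.2) :=
      measurable_from_prod_countable_right fun n => hS.measurable.iterate n
    exact h1.comp ((measurable_retTime hS.measurable hD).prodMk measurable_id)
  refine ⟨hm, ?_⟩
  have hprob : IsProbabilityMeasure (μ.map (fun x => S^[retTime S D x] x)) :=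
    Measure.isProbabilityMeasure_map hm.aemeasurable
  refine Measure.eq_of_le_of_measure_univ_eq ?_ (by simp)
  refine Measure.le_iff.2 fun F hF => ?_
  rw [Measure.map_apply hm hF]
  set b : ℕ → Set X := fun m => {x | (∀ j < m, S^[j] x ∉ D) ∧ S^[m] x ∈ F ∩ D} with hb
  set a : ℕ → Set X := fun k => {x | retTime S D x = k + 1 ∧ S^[k+1] x ∈ F} with ha
  have ham : ∀ k, MeasurableSet (a k) := fun k =>
    (measurableSet_retTime hS.measurable hD k).inter ((hS.measurable.iterate _) hF)
  have hbm : ∀ k, MeasurableSet (b k) := fun k => by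
    have : b k = (⋂ j ∈ Finset.range k, (S^[j] ⁻¹' D)ᶜ) ∩ S^[k] ⁻¹' (F ∩ D) := by
      ext x; simp [hb]
    rw [this]
    exact (Finset.measurableSet_biInter _ fun j _ => ((hS.measurable.iterate _) hD).compl).inter
      ((hS.measurable.iterate _) (hF.inter hD))
  have hstep : ∀ k, μ (a k) + μ (b (k+1)) = μ (b k) := by
    intro k
    rw [← hS.measure_preimage (hbm k).nullMeasurableSet, ← measure_union _ (hbm _)]
    · congr 1
      ext x
      simp only [hb, ha, retTime_eq_succ, mem_union, mem_ofPred_eq, mem_preimage, mem_inter_iff,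
        ← Function.iterate_succ_apply]
      constructor
      · rintro (⟨⟨h1, h2, h3⟩, h4⟩ | ⟨h1, h2⟩)
        · exact ⟨h3, h4, h2⟩
        · exact ⟨fun j hj => h1 (j+1) (by omega), h2⟩
      · rintro ⟨h1, h2, h3⟩
        by_cases hx : x ∈ D
        · exact Or.inl ⟨⟨hx, h3, h1⟩, h2⟩
        · refine Or.inr ⟨fun j hj => ?_, h2, h3⟩
          rcases j with _ | j
          · simpa using hx
          · exact h1 j (by omega)
    · rw [Set.disjoint_left]
      rintro x ⟨h1, -⟩ ⟨h2, -⟩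
      rw [retTime_eq_succ] at h1
      exact h2 0 (by omega) (by simpa using h1.1)
  have hsum : ∀ m, ∑ k ∈ Finset.range m, μ (a k) + μ (b m) = μ (F ∩ D) := by
    intro m
    induction m with
    | zero => simp [hb]
    | succ m ih => rw [Finset.sum_range_succ, add_assoc, hstep, ih]
  have htsum : ∑' k, μ (a k) ≤ μ (F ∩ D) := by
    rw [ENNReal.tsum_eq_iSup_nat]
    exact iSup_le fun m => (hsum m) ▸ le_self_add
  calc μ ((fun x => S^[retTime S D x] x) ⁻¹' F)
      ≤ μ ((F \ D) ∪ (⋃ k, a k)) := by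
        refine measure_mono_ae ?_
        filter_upwards [retTime_pos hS hD] with x hx hxF
        change S^[retTime S D x] x ∈ F at hxF
        by_cases hxD : x ∈ D
        · right
          refine mem_iUnion.2 ⟨retTime S D x - 1, ?_⟩
          have := hx hxD
          have e : retTime S D x - 1 + 1 = retTime S D x := by omega
          refine ⟨e.symm, ?_⟩
          rw [e]; exact hxF
        · left
          refine ⟨?_, hxD⟩
          simpa [retTime, hxD] using hxF
    _ ≤ μ (F \ D) + ∑' k, μ (a k) := (measure_union_le _ _).trans (by gcongr; exact measure_iUnion_le _)
    _ ≤ μ (F \ D) + μ (F ∩ D) := by gcongr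
    _ = μ F := by rw [add_comm, measure_inter_add_sdiff _ hD]

end induced



/-- Continuous paths with the product sigma-algebra. -/
abbrev Pth := {f : ℝ → ℝ // Continuous f}

lemma measurable_pth {α : Type*} [MeasurableSpace α] {f : α → Pth}
    (h : ∀ t : ℝ, Measurable fun a => (f a).1 t) : Measurable f :=
  Measurable.subtype_mk (f := fun a => (f a).1) (measurable_pi_iff.2 h)

lemma measurable_ev : Measurable (fun q : ℝ × Pth => q.2.1 q.1) := by
  have h1 : ∀ x : Pth, Continuous fun t : ℝ => x.1 t := fun x => x.2
  have h2 : ∀ t : ℝ, Measurable fun x : Pth => x.1 t :=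
    fun t => (measurable_pi_apply t).comp measurable_subtype_coe
  exact measurable_uncurry_of_continuous_of_measurable (u := fun (t : ℝ) (x : Pth) => x.1 t) h1 h2

lemma measurable_ev_comp {α : Type*} [MeasurableSpace α] {f : α → Pth} {g : α → ℝ}
    (hf : Measurable f) (hg : Measurable g) : Measurable fun a => (f a).1 (g a) :=
  measurable_ev.comp (hg.prodMk hf)

lemma measurable_evt (t : ℝ) : Measurable fun x : Pth => x.1 t :=
  measurable_ev_comp measurable_id measurable_const

/-- shift -/
def th (s : ℝ) (w : Pth) : Pth := ⟨fun t => w.1 (s + t), w.2.comp (by fun_prop)⟩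

/-- translate in space -/
def tr (x : ℝ) (w : Pth) : Pth := ⟨fun t => x + w.1 t, by have := w.2; fun_prop⟩

@[simp] lemma th_apply (s : ℝ) (w : Pth) (t : ℝ) : (th s w).1 t = w.1 (s + t) := rfl
@[simp] lemma tr_apply (s : ℝ) (w : Pth) (t : ℝ) : (tr s w).1 t = s + w.1 t := rfl

lemma th_th (s t : ℝ) (w : Pth) : th s (th t w) = th (t + s) w := by
  apply Subtype.ext; funext u; simp [add_assoc]

lemma measurable_th : Measurable (fun q : ℝ × Pth => th q.1 q.2) :=
  measurable_pth fun t => measurable_ev_comp (f := fun q : ℝ × Pth => q.2) (g := fun q => q.1 + t)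
    measurable_snd (measurable_fst.add_const t)

lemma measurable_tr : Measurable (fun q : ℝ × Pth => tr q.1 q.2) :=
  measurable_pth fun t => measurable_fst.add
    (measurable_ev_comp (f := fun q : ℝ × Pth => q.2) (g := fun _ => t) measurable_snd measurable_const)

lemma measurable_th_comp {α : Type*} [MeasurableSpace α] {f : α → Pth} {g : α → ℝ}
    (hf : Measurable f) (hg : Measurable g) : Measurable fun a => th (g a) (f a) :=
  measurable_th.comp (hg.prodMk hf)

lemma measurable_tr_comp {α : Type*} [MeasurableSpace α] {f : α → Pth} {g : α → ℝ}
    (hf : Measurable f) (hg : Measurable g) : Measurable fun a => tr (g a) (f a) :=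
  measurable_tr.comp (hg.prodMk hf)

/-- shift and recentre -/
def rc (s : ℝ) (w : Pth) : Pth := tr (-w.1 s) (th s w)

lemma measurable_rc (s : ℝ) : Measurable (rc s) :=
  measurable_tr_comp (measurable_th_comp measurable_id measurable_const) (measurable_evt s).neg

lemma pth_ext {μ ν : Measure Pth} [IsFiniteMeasure μ] [IsFiniteMeasure ν]
    (h : ∀ I : Finset ℝ, μ.map (fun w => I.restrict w.1) = ν.map (fun w => I.restrict w.1)) :
    μ = ν := by
  have hc : Measurable (fun w : Pth => w.1) := measurable_subtype_coe
  have h1 : μ.map (fun w : Pth => w.1) = ν.map (fun w : Pth => w.1) := by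
    have a1 : IsProjectiveLimit (μ.map (fun w : Pth => w.1))
        (fun I => μ.map (fun w => I.restrict w.1)) := by
      intro I
      rw [Measure.map_map (Finset.measurable_restrict _) hc]; rfl
    have a2 : IsProjectiveLimit (ν.map (fun w : Pth => w.1))
        (fun I => μ.map (fun w => I.restrict w.1)) := by
      intro I
      show _ = μ.map (fun w => I.restrict w.1)
      rw [h I, Measure.map_map (Finset.measurable_restrict _) hc]; rfl
    exact a1.unique a2
  ext s hs
  obtain ⟨u, hu, rfl⟩ := hs
  have := congrArg (fun m => m u) h1
  simpa [Measure.map_apply hc hu] using this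

structure IsBMLaw (W : Measure Pth) : Prop where
  prob : IsProbabilityMeasure W
  zero : ∀ᵐ w ∂W, w.1 0 = 0
  shift : ∀ s, W.map (rc s) = W
  gauss : ∀ t : ℝ, 0 ≤ t → W.map (fun w => w.1 t) = gaussianReal 0 t.toNNReal

lemma fin_telescope {n : ℕ} (f : Fin (n+1) → ℝ) (k : Fin (n+1)) :
    ∑ i : Fin n, (if i.castSucc < k then f i.succ - f i.castSucc else 0) = f k - f 0 := by
  induction k using Fin.induction with
  | zero => simp
  | succ j ih =>
    have : ∀ i : Fin n, (if i.castSucc < j.succ then f i.succ - f i.castSucc else 0)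
        = (if i.castSucc < j.castSucc then f i.succ - f i.castSucc else 0)
          + (if i = j then f i.succ - f i.castSucc else 0) := by
      intro i
      rcases lt_trichotomy i j with h | h | h
      · have h1 : i.castSucc < j.succ := by
          simp only [Fin.lt_def, Fin.val_castSucc, Fin.val_succ] at *; omega
        have h2 : i.castSucc < j.castSucc := by
          simp only [Fin.lt_def, Fin.val_castSucc, Fin.val_succ] at *; omega
        simp [h1, h2, h.ne]
      · subst h; simp
      · have h1 : ¬ i.castSucc < j.succ := by
          simp only [Fin.lt_def, Fin.val_castSucc, Fin.val_succ] at *; omega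
        have h2 : ¬ i.castSucc < j.castSucc := by
          simp only [Fin.lt_def, Fin.val_castSucc, Fin.val_succ] at *; omega
        simp [h1, h2, h.ne']
    simp_rw [this, Finset.sum_add_distrib, ih]
    simp

lemma incr_law {Ω : Type*} [MeasurableSpace Ω] {P : Measure Ω} [IsProbabilityMeasure P]
    {B : ℝ → Ω → ℝ} (hB : IsTwoSidedBM P B) {n : ℕ} (t : Fin (n+1) → ℝ) (ht : StrictMono t) :
    P.map (fun ω (i : Fin n) => B (t i.succ) ω - B (t i.castSucc) ω)
      = Measure.pi (fun i : Fin n => gaussianReal 0 (t i.succ - t i.castSucc).toNNReal) := by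
  have := (iIndepFun_iff_map_fun_eq_pi_map
    (fun i : Fin n => (hB.aemeas (t i.succ)).sub (hB.aemeas (t i.castSucc)))).1
    (hB.indepIncr n t ht.monotone)
  refine this.trans ?_
  congr 1
  funext i
  exact hB.gaussIncr _ _ (ht (Fin.castSucc_lt_succ))

lemma fdd_eq {Ω Ω' : Type*} [MeasurableSpace Ω] [MeasurableSpace Ω'] {P : Measure Ω}
    {P' : Measure Ω'} [IsProbabilityMeasure P] [IsProbabilityMeasure P']
    {B : ℝ → Ω → ℝ} {B' : ℝ → Ω' → ℝ} (hB : IsTwoSidedBM P B) (hB' : IsTwoSidedBM P' B')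
    (I : Finset ℝ) :
    P.map (fun ω => I.restrict (fun t => B t ω)) = P'.map (fun ω => I.restrict (fun t => B' t ω)) := by
  classical
  obtain ⟨n, hn⟩ : ∃ n, (insert 0 I).card = n + 1 :=
    ⟨(insert 0 I).card - 1, by have := Finset.card_pos.2 (Finset.insert_nonempty 0 I); omega⟩
  set t : Fin (n+1) → ℝ := fun k => (insert 0 I).orderEmbOfFin hn k with ht
  have htm : StrictMono t := ((insert 0 I).orderEmbOfFin hn).strictMono
  have hrange : ∀ s ∈ insert 0 I, ∃ k, t k = s := by
    intro s hs
    have := Finset.range_orderEmbOfFin (insert 0 I) hn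
    have h2 : s ∈ Set.range ((insert 0 I).orderEmbOfFin hn) := by rw [this]; exact hs
    exact h2
  obtain ⟨k0, hk0⟩ := hrange 0 (Finset.mem_insert_self _ _)
  have hk : ∀ s : I, ∃ k, t k = s := fun s => hrange s (Finset.mem_insert_of_mem s.2)
  choose k hk using hk
  set L : (Fin n → ℝ) → (I → ℝ) := fun d s =>
    (∑ i : Fin n, if i.castSucc < k s then d i else 0)
      - ∑ i : Fin n, if i.castSucc < k0 then d i else 0 with hL
  have hLm : Measurable L := by
    refine measurable_pi_iff.2 fun s => ?_
    refine Measurable.sub ?_ ?_ <;>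
    · refine Finset.measurable_sum _ fun i _ => ?_
      split_ifs
      · exact measurable_pi_apply i
      · exact measurable_const
  have key : ∀ {Ω'' : Type _} [MeasurableSpace Ω''] (P : Measure Ω'') [IsProbabilityMeasure P]
      (B : ℝ → Ω'' → ℝ) (hB : IsTwoSidedBM P B),
      P.map (fun ω => I.restrict (fun t => B t ω)) =
        (Measure.pi (fun i : Fin n => gaussianReal 0 (t i.succ - t i.castSucc).toNNReal)).map L := by
    intro Ω'' _ P _ B hB
    rw [← incr_law hB t htm, AEMeasurable.map_map_of_aemeasurable hLm.aemeasurable]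
    · refine Measure.map_congr ?_
      filter_upwards [hB.zero] with ω hω
      funext s
      simp only [Function.comp, hL, Finset.restrict]
      rw [fin_telescope (fun j => B (t j) ω), fin_telescope (fun j => B (t j) ω), hk, hk0, hω]
      ring
    · exact aemeasurable_pi_lambda _ fun i => (hB.aemeas _).sub (hB.aemeas _)
  have e1 : P.map (fun ω => I.restrict (fun t => B t ω)) =
        (Measure.pi (fun i : Fin n => gaussianReal 0 (t i.succ - t i.castSucc).toNNReal)).map L := by
    rw [← incr_law hB t htm, AEMeasurable.map_map_of_aemeasurable hLm.aemeasurable]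
    · refine Measure.map_congr ?_
      filter_upwards [hB.zero] with ω hω
      funext s
      simp only [Function.comp, hL, Finset.restrict]
      rw [fin_telescope (fun j => B (t j) ω), fin_telescope (fun j => B (t j) ω), hk, hk0, hω]
      ring
    · exact aemeasurable_pi_lambda _ fun i => (hB.aemeas _).sub (hB.aemeas _)
  rw [e1, key P' B' hB']

lemma shift_isBM {Ω : Type*} [MeasurableSpace Ω] {P : Measure Ω}
    {B : ℝ → Ω → ℝ} (hB : IsTwoSidedBM P B) (s : ℝ) :
    IsTwoSidedBM P (fun t ω => B (s + t) ω - B s ω) where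
  aemeas t := (hB.aemeas _).sub (hB.aemeas _)
  cont := by
    filter_upwards [hB.cont] with ω h
    exact (h.comp (continuous_const.add continuous_id)).sub continuous_const
  zero := by simp
  indepIncr n t ht := by
    have := hB.indepIncr n (fun i => s + t i) (fun i j h => by simpa using ht h)
    simpa using this
  gaussIncr u v h := by
    have := hB.gaussIncr (s + u) (s + v) (by linarith)
    simpa using this

lemma exists_path {Ω : Type*} [MeasurableSpace Ω] {P : Measure Ω}
    {B : ℝ → Ω → ℝ} (hB : IsTwoSidedBM P B) :
    ∃ π : Ω → Pth, Measurable π ∧ ∀ᵐ ω ∂P, ∀ t, (π ω).1 t = B t ω := by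
  classical
  have h1 : ∀ᵐ ω ∂P, Continuous (fun t => B t ω) ∧
      ∀ q : ℚ, B q ω = (hB.aemeas q).mk (B q) ω := by
    refine hB.cont.and (ae_all_iff.2 fun q => (hB.aemeas q).ae_eq_mk)
  obtain ⟨M, hM, hMm, hM0⟩ : ∃ M : Set Ω, (∀ ω ∈ M, Continuous (fun t => B t ω) ∧
      ∀ q : ℚ, B q ω = (hB.aemeas q).mk (B q) ω) ∧ MeasurableSet M ∧ P Mᶜ = 0 := by
    obtain ⟨N, hN, hNm, hN0⟩ := exists_measurable_superset_of_null (ae_iff.1 h1)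
    refine ⟨Nᶜ, fun ω hω => ?_, hNm.compl, by simpa using hN0⟩
    by_contra hcon
    exact hω (hN hcon)
  refine ⟨fun ω => if h : ω ∈ M then ⟨fun t => B t ω, (hM ω h).1⟩ else ⟨fun _ => 0, by fun_prop⟩,
    ?_, ?_⟩
  · refine measurable_pth fun t => ?_
    obtain ⟨q, hq⟩ : ∃ q : ℕ → ℚ, Tendsto (fun n => (q n : ℝ)) atTop (𝓝 t) := by
      have := Rat.isDenseEmbedding_coe_real.dense t
      obtain ⟨x, hx, hx2⟩ := mem_closure_iff_seq_limit.1 this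
      choose q hq using hx
      exact ⟨q, by simpa [hq] using hx2⟩
    refine measurable_of_tendsto_metrizable
      (f := fun n ω => if ω ∈ M then (hB.aemeas (q n)).mk (B (q n)) ω else 0) ?_ ?_
    · intro n
      exact Measurable.ite hMm (hB.aemeas (q n)).measurable_mk measurable_const
    · rw [tendsto_pi_nhds]
      intro ω
      by_cases h : ω ∈ M
      · simp only [h, if_true, dif_pos]
        simp_rw [← (hM ω h).2]
        exact ((hM ω h).1.tendsto t).comp hq
      · simp [h]
  · filter_upwards [compl_mem_ae_iff.2 hM0] with ω hω t
    have : ω ∈ M := by simpa using hω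
    simp [this]

lemma isBMLaw_map {Ω : Type*} [MeasurableSpace Ω] {P : Measure Ω} [IsProbabilityMeasure P]
    {B : ℝ → Ω → ℝ} (hB : IsTwoSidedBM P B) {π : Ω → Pth} (hπ : Measurable π)
    (hπB : ∀ᵐ ω ∂P, ∀ t, (π ω).1 t = B t ω) : IsBMLaw (P.map π) where
  prob := Measure.isProbabilityMeasure_map hπ.aemeasurable
  zero := by
    rw [ae_map_iff (p := fun w : Pth => w.1 0 = 0) hπ.aemeasurable ((measurable_evt 0) (measurableSet_singleton 0))]
    filter_upwards [hπB, hB.zero] with ω h1 h2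
    rw [h1, h2]
  shift s := by
    have := Measure.isProbabilityMeasure_map (μ := P) hπ.aemeasurable
    have h2 : IsProbabilityMeasure ((P.map π).map (rc s)) :=
      Measure.isProbabilityMeasure_map (measurable_rc s).aemeasurable
    refine pth_ext fun I => ?_
    have hr : Measurable (fun w : Pth => I.restrict w.1) :=
      (Finset.measurable_restrict I).comp measurable_subtype_coe
    rw [Measure.map_map hr (measurable_rc s), Measure.map_map (hr.comp (measurable_rc s)) hπ,
      Measure.map_map hr hπ]
    have e1 : P.map ((fun w : Pth => I.restrict w.1) ∘ π)
        = P.map (fun ω => I.restrict (fun t => B t ω)) := by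
      refine Measure.map_congr ?_
      filter_upwards [hπB] with ω h
      funext i; simp [h]
    have e2 : P.map (((fun w : Pth => I.restrict w.1) ∘ rc s) ∘ π)
        = P.map (fun ω => I.restrict (fun t => B (s + t) ω - B s ω)) := by
      refine Measure.map_congr ?_
      filter_upwards [hπB] with ω h
      funext i; simp [h, rc]; ring
    rw [e1, e2]
    exact fdd_eq (shift_isBM hB s) hB I
  gauss t ht := by
    rw [Measure.map_map (measurable_evt t) hπ]
    have e : P.map ((fun x : Pth => x.1 t) ∘ π) = P.map (fun ω => B t ω - B 0 ω) := by
      refine Measure.map_congr ?_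
      filter_upwards [hπB, hB.zero] with ω h1 h2
      simp [h1, h2]
    rw [e]
    rcases ht.eq_or_lt with rfl | ht
    · simp [Measure.map_const]
    · simpa using hB.gaussIncr 0 t ht

lemma isBM_transfer {Ω : Type*} [MeasurableSpace Ω] {P : Measure Ω} [IsProbabilityMeasure P]
    {B C : ℝ → Ω → ℝ} (hB : IsTwoSidedBM P B) {π π' : Ω → Pth} (hπ : Measurable π)
    (hπ' : Measurable π')
    (hπB : ∀ᵐ ω ∂P, ∀ t, (π ω).1 t = B t ω) (hπC : ∀ᵐ ω ∂P, ∀ t, (π' ω).1 t = C t ω)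
    (hmap : P.map π' = P.map π) : IsTwoSidedBM P C := by
  have hC : ∀ t, AEMeasurable (C t) P := fun t =>
    ⟨fun ω => (π' ω).1 t, (measurable_evt t).comp hπ', by
      filter_upwards [hπC] with ω h using (h t).symm⟩
  have gen : ∀ {E : Type} [MeasurableSpace E] (F : (ℝ → ℝ) → E)
      (hF : Measurable F), P.map (fun ω => F (fun t => C t ω)) = P.map (fun ω => F (fun t => B t ω)) := by
    intro E _ F hF
    have hF' : Measurable (fun w : Pth => F w.1) := hF.comp measurable_subtype_coe
    have e1 : P.map (fun ω => F (fun t => C t ω)) = (P.map π').map (fun w : Pth => F w.1) := by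
      rw [Measure.map_map hF' hπ']
      refine Measure.map_congr ?_
      filter_upwards [hπC] with ω h
      simp only [Function.comp]; congr 1; funext t; exact (h t).symm
    have e2 : P.map (fun ω => F (fun t => B t ω)) = (P.map π).map (fun w : Pth => F w.1) := by
      rw [Measure.map_map hF' hπ]
      refine Measure.map_congr ?_
      filter_upwards [hπB] with ω h
      simp only [Function.comp]; congr 1; funext t; exact (h t).symm
    rw [e1, e2, hmap]
  refine ⟨hC, ?_, ?_, ?_, ?_⟩
  · filter_upwards [hπC] with ω h
    have : (fun t => C t ω) = (π' ω).1 := by funext t; exact (h t).symm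
    rw [this]; exact (π' ω).2
  · have h := gen (fun f => f 0) (measurable_pi_apply 0)
    have h0 : ∀ᵐ x ∂(P.map (fun ω => C 0 ω)), x = 0 := by
      rw [h, ae_map_iff (p := fun x : ℝ => x = 0) (hB.aemeas 0) (measurableSet_singleton (0:ℝ))]
      exact hB.zero
    exact ae_of_ae_map (hC 0) h0
  · intro n t ht
    refine (iIndepFun_iff_map_fun_eq_pi_map (fun i : Fin n => (hC (t i.succ)).sub (hC (t i.castSucc)))).2 ?_
    have h1 := (iIndepFun_iff_map_fun_eq_pi_map
      (fun i : Fin n => (hB.aemeas (t i.succ)).sub (hB.aemeas (t i.castSucc)))).1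
      (hB.indepIncr n t ht)
    have g1 := gen (fun f (i : Fin n) => f (t i.succ) - f (t i.castSucc))
      (measurable_pi_iff.2 fun i => (measurable_pi_apply _).sub (measurable_pi_apply _))
    have g2 := fun i : Fin n => gen (fun f => f (t i.succ) - f (t i.castSucc))
      ((measurable_pi_apply (t i.succ)).sub (measurable_pi_apply (t i.castSucc)))
    refine (g1.trans h1).trans ?_
    congr 1
    funext i
    exact (g2 i).symm
  · intro s t hst
    rw [← hB.gaussIncr s t hst]
    exact gen (fun f => f t - f s) ((measurable_pi_apply t).sub (measurable_pi_apply s))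



/-- The stationary (infinite) measure of Brownian motion started from Lebesgue measure. -/
noncomputable def muM (W : Measure Pth) : Measure Pth :=
  (volume.prod W).map (fun q : ℝ × Pth => tr q.1 q.2)

lemma th_tr (s x : ℝ) (w : Pth) : th s (tr x w) = tr x (th s w) := rfl

lemma tr_tr (x y : ℝ) (w : Pth) : tr x (tr y w) = tr (x + y) w := by
  apply Subtype.ext; funext u; simp [add_assoc]

lemma th_zero (w : Pth) : th 0 w = w := by
  apply Subtype.ext; funext u; simp

lemma measurable_thc (s : ℝ) : Measurable (th s) :=
  measurable_th_comp measurable_id measurable_const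

lemma measurable_trc (s : ℝ) : Measurable (tr s) :=
  measurable_tr_comp measurable_id measurable_const

lemma lintegral_muM {W : Measure Pth} [IsProbabilityMeasure W] {F : Pth → ℝ≥0∞}
    (hF : Measurable F) :
    ∫⁻ w, F w ∂muM W = ∫⁻ x : ℝ, ∫⁻ w, F (tr x w) ∂W := by
  rw [muM, lintegral_map hF measurable_tr,
    lintegral_prod (fun q : ℝ × Pth => F (tr q.1 q.2)) (hF.comp measurable_tr).aemeasurable]

lemma mp_th {W : Measure Pth} (hW : IsBMLaw W) (s : ℝ) :
    MeasurePreserving (th s) (muM W) (muM W) := by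
  have := hW.prob
  refine ⟨measurable_thc s, ?_⟩
  refine Measure.ext_of_lintegral _ fun F hF => ?_
  rw [lintegral_map hF (measurable_thc s), lintegral_muM (F := fun w => F (th s w)) (hF.comp (measurable_thc s)),
    lintegral_muM hF]
  have m1 : Measurable (fun q : ℝ × Pth => F (th s (tr q.1 q.2))) :=
    hF.comp ((measurable_thc s).comp measurable_tr)
  have m2 : Measurable (fun q : ℝ × Pth => F (tr q.1 (rc s q.2))) :=
    hF.comp (measurable_tr_comp ((measurable_rc s).comp measurable_snd) measurable_fst)
  rw [lintegral_lintegral_swap m1.aemeasurable]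
  have e : ∀ w : Pth, ∫⁻ x : ℝ, F (th s (tr x w)) = ∫⁻ x : ℝ, F (tr x (rc s w)) := by
    intro w
    rw [← lintegral_add_right_eq_self (fun x : ℝ => F (tr x (rc s w))) (w.1 s)]
    congr 1; funext x
    congr 1
    apply Subtype.ext; funext u
    simp [rc]
  simp_rw [e]
  rw [lintegral_lintegral_swap (μ := W) (ν := volume) (f := fun w x => F (tr x (rc s w)))
    (m2.comp measurable_swap).aemeasurable]
  congr 1; funext x
  conv_rhs => rw [← hW.shift s]
  rw [lintegral_map (f := fun w => F (tr x w)) (hF.comp (measurable_trc x)) (measurable_rc s)]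

lemma gauss_mul {a b : ℝ≥0} (ha : 0 < a) (hb : 0 < b) (x y : ℝ) :
    gaussianPDFReal 0 a x * gaussianPDFReal 0 b (x + y)
      = gaussianPDFReal 0 (a + b) y * gaussianPDFReal (-(a * y / (a + b))) (a * b / (a + b)) x := by
  have ha' : (0:ℝ) < a := ha
  have hb' : (0:ℝ) < b := hb
  simp only [gaussianPDFReal]
  have h1 : ∀ p q r t : ℝ, (p * Real.exp q) * (r * Real.exp t) = (p * r) * Real.exp (q + t) := by
    intro p q r t; rw [Real.exp_add]; ring
  rw [h1, h1]
  congr 1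
  · rw [← mul_inv, ← mul_inv, ← Real.sqrt_mul (by positivity), ← Real.sqrt_mul (by positivity)]
    congr 2
    push_cast
    field_simp
  · congr 1
    push_cast
    field_simp
    ring

lemma gauss_conv {a b : ℝ≥0} (ha : 0 < a) (hb : 0 < b) (y : ℝ) :
    ∫⁻ x, gaussianPDF 0 a x * gaussianPDF 0 b (x + y) = gaussianPDF 0 (a + b) y := by
  have : ∀ x, gaussianPDF 0 a x * gaussianPDF 0 b (x + y)
      = gaussianPDF 0 (a + b) y * gaussianPDF (-(a * y / (a + b))) (a * b / (a + b)) x := by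
    intro x
    simp only [gaussianPDF]
    rw [← ENNReal.ofReal_mul (gaussianPDFReal_nonneg _ _ _), gauss_mul ha hb,
      ENNReal.ofReal_mul (gaussianPDFReal_nonneg _ _ _)]
  simp_rw [this]
  rw [lintegral_const_mul _ (measurable_gaussianPDF _ _), lintegral_gaussianPDF_eq_one, mul_one]
  have : 0 < a * b / (a + b) := by positivity
  exact this.ne'

lemma gauss_exp {W : Measure Pth} (hW : IsBMLaw W) {c : ℝ≥0} (hc : 0 < c) {t : ℝ} (ht : 0 ≤ t) :
    ∫⁻ w, gaussianPDF 0 c (w.1 t) ∂W = gaussianPDF 0 (c + t.toNNReal) 0 := by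
  rw [← lintegral_map (measurable_gaussianPDF 0 c) (measurable_evt t), hW.gauss t ht]
  rcases ht.eq_or_lt with rfl | h
  · simp
  · have h' : 0 < t.toNNReal := Real.toNNReal_pos.2 h
    rw [gaussianReal_of_var_ne_zero _ h'.ne', lintegral_withDensity_eq_lintegral_mul _
      (measurable_gaussianPDF _ _) (measurable_gaussianPDF _ _), ← gauss_conv hc h' 0]
    congr 1; funext x; simp [mul_comm]

lemma two_pt_aux {W : Measure Pth} (hW : IsBMLaw W) {a b : ℝ≥0} (ha : 0 < a) (hb : 0 < b)
    {s u : ℝ} (hsu : s ≤ u) :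
    ∫⁻ w, gaussianPDF 0 a (w.1 s) * gaussianPDF 0 b (w.1 u) ∂(muM W)
      = gaussianPDF 0 (a + b + (u - s).toNNReal) 0 := by
  have := hW.prob
  have hm : ∀ s u, Measurable
      (fun w : Pth => gaussianPDF 0 a (w.1 s) * gaussianPDF 0 b (w.1 u)) := fun s u =>
    ((measurable_gaussianPDF _ _).comp (measurable_evt s)).mul
      ((measurable_gaussianPDF _ _).comp (measurable_evt u))
  rw [← gauss_exp hW (add_pos ha hb) (sub_nonneg.2 hsu)]
  have e1 := (mp_th hW s).lintegral_comp (hm 0 (u - s))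
  simp only [th_apply, add_zero, add_sub_cancel] at e1
  rw [e1, lintegral_muM (hm _ _)]
  have e2 : ∀ x : ℝ, ∫⁻ w, gaussianPDF 0 a ((tr x w).1 0) * gaussianPDF 0 b ((tr x w).1 (u - s)) ∂W
      = ∫⁻ w, gaussianPDF 0 a x * gaussianPDF 0 b (x + w.1 (u - s)) ∂W := by
    intro x
    refine lintegral_congr_ae ?_
    filter_upwards [hW.zero] with w hw
    simp [hw]
  simp_rw [e2]
  rw [lintegral_lintegral_swap]
  · simp_rw [gauss_conv ha hb]
  · refine Measurable.aemeasurable ?_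
    refine ((measurable_gaussianPDF _ _).comp measurable_fst).mul
      ((measurable_gaussianPDF _ _).comp (measurable_fst.add
        ((measurable_evt (u - s)).comp measurable_snd)))

lemma two_pt {W : Measure Pth} (hW : IsBMLaw W) {a b : ℝ≥0} (ha : 0 < a) (hb : 0 < b)
    (s u : ℝ) :
    ∫⁻ w, gaussianPDF 0 a (w.1 s) * gaussianPDF 0 b (w.1 u) ∂(muM W)
      = gaussianPDF 0 (a + b + |u - s|.toNNReal) 0 := by
  rcases le_total s u with h | h
  · rw [two_pt_aux hW ha hb h, abs_of_nonneg (sub_nonneg.2 h)]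
  · rw [abs_sub_comm, abs_of_nonneg (sub_nonneg.2 h), add_comm a b, ← two_pt_aux hW hb ha h]
    congr 1; funext w; rw [mul_comm]

lemma one_pt {W : Measure Pth} (hW : IsBMLaw W) {F : ℝ → ℝ≥0∞} (hF : Measurable F) (s : ℝ) :
    ∫⁻ w, F (w.1 s) ∂(muM W) = ∫⁻ x, F x := by
  have := hW.prob
  have e1 := (mp_th hW s).lintegral_comp (hF.comp (measurable_evt 0))
  simp only [Function.comp_apply, th_apply, add_zero] at e1
  rw [e1, lintegral_muM (F := fun w : Pth => F (w.1 0)) (hF.comp (measurable_evt 0))]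
  congr 1; funext x
  have : ∫⁻ w, F ((tr x w).1 0) ∂W = ∫⁻ w, F x ∂W := by
    refine lintegral_congr_ae ?_
    filter_upwards [hW.zero] with w hw
    simp [hw]
  rw [this]; simp

lemma muM_box {W : Measure Pth} (hW : IsBMLaw W) (K : ℝ) :
    muM W {w | |w.1 0| ≤ K} = ENNReal.ofReal (2 * K) := by
  have hs : MeasurableSet {x : ℝ | |x| ≤ K} := (isClosed_le continuous_abs continuous_const).measurableSet
  have := one_pt hW (F := indicator {x : ℝ | |x| ≤ K} 1) (measurable_one.indicator hs) 0
  rw [lintegral_indicator_one hs] at this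
  have e : {x : ℝ | |x| ≤ K} = Icc (-K) K := by ext x; simp [abs_le]
  rw [e, Real.volume_Icc] at this
  have e2 : (fun w : Pth => indicator (Icc (-K) K) (1 : ℝ → ℝ≥0∞) (w.1 0))
      = indicator {w : Pth | |w.1 0| ≤ K} 1 := by
    funext w
    simp [indicator, abs_le]
  rw [e2, lintegral_indicator_one] at this
  · rw [this]; congr 1; ring
  · exact (measurable_evt 0) hs

lemma sigmaFinite_muM {W : Measure Pth} (hW : IsBMLaw W) : SigmaFinite (muM W) := by
  refine ⟨⟨⟨fun n => {w : Pth | |w.1 0| ≤ n}, fun _ => trivial, fun n => ?_, ?_⟩⟩⟩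
  · rw [muM_box hW]; exact ENNReal.ofReal_lt_top
  · refine eq_univ_of_forall fun w => mem_iUnion.2 ?_
    exact exists_nat_ge (|w.1 0|)



lemma lintegral_inv_sqrt {l : ℝ} (hl : 0 ≤ l) :
    ∫⁻ x, indicator (Ioc 0 l) (fun x => ENNReal.ofReal (√x)⁻¹) x = ENNReal.ofReal (2 * √l) := by
  rw [lintegral_indicator measurableSet_Ioc]
  have hI : IntegrableOn (fun x : ℝ => x ^ (-(1/2) : ℝ)) (Ioc 0 l) :=
    (intervalIntegrable_iff_integrableOn_Ioc_of_le hl).1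
      (intervalIntegral.intervalIntegrable_rpow' (by norm_num))
  have e : ∀ x ∈ Ioc 0 l, ENNReal.ofReal (√x)⁻¹ = ENNReal.ofReal (x ^ (-(1/2) : ℝ)) := by
    intro x hx
    rw [Real.rpow_neg hx.1.le, ← Real.sqrt_eq_rpow]
  rw [setLIntegral_congr_fun measurableSet_Ioc e, ← ofReal_integral_eq_lintegral_ofReal hI]
  · rw [← intervalIntegral.integral_of_le hl, integral_rpow (by left; norm_num)]
    congr 1
    rw [show (-(1/2) + 1 : ℝ) = 1/2 by norm_num, Real.zero_rpow (by norm_num), ← Real.sqrt_eq_rpow]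
    ring
  · filter_upwards [ae_restrict_mem measurableSet_Ioc] with x hx
    exact Real.rpow_nonneg hx.1.le _

lemma inner_bound {p q s : ℝ} (hs : s ∈ Ico p q) (c : ℝ≥0) :
    ∫⁻ u in Ico p q, gaussianPDF 0 (c + |u - s|.toNNReal) 0 ≤ ENNReal.ofReal (4 * √(q - p)) := by
  set h : ℝ → ℝ≥0∞ := indicator (Ioc 0 (q - p)) (fun x => ENNReal.ofReal (√x)⁻¹) with hh
  have hl : 0 ≤ q - p := by linarith [hs.1, hs.2]
  have hm : Measurable h := by
    refine Measurable.indicator ?_ measurableSet_Ioc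
    fun_prop
  rw [← lintegral_indicator measurableSet_Ico]
  have hle : ∀ᵐ u : ℝ, (Ico p q).indicator (fun u => gaussianPDF 0 (c + |u - s|.toNNReal) 0) u
      ≤ h (u - s) + h (s - u) := by
    have hne : ∀ᵐ u : ℝ, u ≠ s := by simp [ae_iff]
    filter_upwards [hne] with u hu
    by_cases hmem : u ∈ Ico p q
    · rw [indicator_of_mem hmem]
      have hb : gaussianPDF 0 (c + |u - s|.toNNReal) 0 ≤ ENNReal.ofReal (√|u - s|)⁻¹ := by
        simp only [gaussianPDF, gaussianPDFReal]
        apply ENNReal.ofReal_le_ofReal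
        simp only [sub_zero, ne_eq, OfNat.ofNat_ne_zero, not_false_eq_true, zero_pow, neg_zero,
          zero_div, Real.exp_zero, mul_one]
        have hpos : 0 < |u - s| := abs_pos.2 (sub_ne_zero.2 hu)
        apply inv_anti₀ (Real.sqrt_pos.2 hpos)
        apply Real.sqrt_le_sqrt
        push_cast
        rw [Real.coe_toNNReal _ (abs_nonneg _)]
        have := Real.pi_gt_three
        have hc : (0:ℝ) ≤ c := c.2
        nlinarith
      refine hb.trans ?_
      rcases lt_or_gt_of_ne hu with h1 | h1
      · have : s - u ∈ Ioc 0 (q - p) := ⟨by linarith, by linarith [hs.1, hs.2, hmem.1, hmem.2]⟩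
        rw [abs_sub_comm, abs_of_pos this.1]
        refine le_trans ?_ le_add_self
        rw [hh, indicator_of_mem this]
      · have : u - s ∈ Ioc 0 (q - p) := ⟨by linarith, by linarith [hs.1, hs.2, hmem.1, hmem.2]⟩
        rw [abs_of_pos this.1]
        refine le_trans ?_ le_self_add
        rw [hh, indicator_of_mem this]
    · rw [indicator_of_notMem hmem]; exact zero_le
  refine (lintegral_mono_ae hle).trans ?_
  rw [lintegral_add_left (f := fun u => h (u - s)) (hm.comp (measurable_id.sub_const s)), lintegral_sub_right_eq_self h s,
    lintegral_sub_left_eq_self h s, lintegral_inv_sqrt hl,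
    ← ENNReal.ofReal_add (by positivity) (by positivity)]
  apply ENNReal.ofReal_le_ofReal; linarith

/-- energy -/
noncomputable def Gam (p q : ℝ) (c : ℝ≥0) : ℝ≥0∞ :=
  ∫⁻ s in Ico p q, ∫⁻ u in Ico p q, gaussianPDF 0 (c + |u - s|.toNNReal) 0

lemma Gam_le (p q : ℝ) (c : ℝ≥0) :
    Gam p q c ≤ ENNReal.ofReal (4 * (q - p) * √(q - p)) := by
  have : Gam p q c ≤ ∫⁻ s in Ico p q, ENNReal.ofReal (4 * √(q - p)) :=
    setLIntegral_mono measurable_const fun s hs => inner_bound hs c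
  refine this.trans ?_
  rw [setLIntegral_const, Real.volume_Ico, ← ENNReal.ofReal_mul (by positivity)]
  apply ENNReal.ofReal_le_ofReal; linarith

lemma Gam_anti (p q : ℝ) {a b : ℝ≥0} (ha : 0 < a) (hab : a ≤ b) : Gam p q b ≤ Gam p q a := by
  refine lintegral_mono fun s => lintegral_mono fun u => ?_
  simp only [gaussianPDF, gaussianPDFReal]
  apply ENNReal.ofReal_le_ofReal
  simp only [sub_zero, ne_eq, OfNat.ofNat_ne_zero, not_false_eq_true, zero_pow, neg_zero,
          zero_div, Real.exp_zero, mul_one]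
  have ha' : (0:ℝ) < a := ha
  have hab' : (a:ℝ) ≤ b := hab
  apply inv_anti₀
  · apply Real.sqrt_pos.2
    push_cast
    positivity
  · apply Real.sqrt_le_sqrt
    push_cast
    gcongr

/-- mollified local time -/
noncomputable def fE (p q : ℝ) (c : ℝ≥0) (w : Pth) : ℝ≥0∞ :=
  ∫⁻ s in Ico p q, gaussianPDF 0 c (w.1 s)

lemma measurable_gev (c : ℝ≥0) : Measurable (fun z : ℝ × Pth => gaussianPDF 0 c (z.2.1 z.1)) :=
  (measurable_gaussianPDF 0 c).comp measurable_ev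

lemma measurable_fE (p q : ℝ) (c : ℝ≥0) : Measurable (fE p q c) :=
  Measurable.lintegral_prod_left' (measurable_gev c)

lemma fE_lt_top (p q : ℝ) (c : ℝ≥0) (w : Pth) : fE p q c w < ∞ := by
  have : fE p q c w ≤ ∫⁻ s in Ico p q, ENNReal.ofReal ((√(2 * Real.pi * c))⁻¹) := by
    refine lintegral_mono fun s => ?_
    simp only [gaussianPDF, gaussianPDFReal]
    apply ENNReal.ofReal_le_ofReal
    apply mul_le_of_le_one_right (by positivity)
    apply Real.exp_le_one_iff.2
    have : (0:ℝ) ≤ c := c.2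
    apply div_nonpos_of_nonpos_of_nonneg <;> nlinarith [sq_nonneg (w.1 s - 0)]
  refine this.trans_lt ?_
  rw [setLIntegral_const, Real.volume_Ico]
  exact ENNReal.mul_lt_top ENNReal.ofReal_lt_top ENNReal.ofReal_lt_top

lemma fE_mul {W : Measure Pth} (hW : IsBMLaw W) {a b : ℝ≥0} (ha : 0 < a) (hb : 0 < b) (p q : ℝ) :
    ∫⁻ w, fE p q a w * fE p q b w ∂(muM W) = Gam p q (a + b) := by
  have := hW.prob
  have := sigmaFinite_muM hW
  have e : ∀ w, fE p q a w * fE p q b w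
      = ∫⁻ s in Ico p q, ∫⁻ u in Ico p q, gaussianPDF 0 a (w.1 s) * gaussianPDF 0 b (w.1 u) := by
    intro w
    have m : ∀ c, Measurable fun s => gaussianPDF 0 c (w.1 s) := fun c =>
      (measurable_gaussianPDF 0 c).comp w.2.measurable
    simp_rw [lintegral_const_mul _ (m b)]
    rw [lintegral_mul_const _ (m a)]
    rfl
  simp_rw [e]
  have m3 : Measurable (fun z : (Pth × ℝ) × ℝ =>
      gaussianPDF 0 a (z.1.1.1 z.1.2) * gaussianPDF 0 b (z.1.1.1 z.2)) := by
    have h1 : Measurable fun z : (Pth × ℝ) × ℝ => gaussianPDF 0 a (z.1.1.1 z.1.2) :=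
      (measurable_gaussianPDF 0 a).comp (measurable_ev_comp (f := fun z : (Pth × ℝ) × ℝ => z.1.1)
        (g := fun z => z.1.2) (by fun_prop) (by fun_prop))
    have h2 : Measurable fun z : (Pth × ℝ) × ℝ => gaussianPDF 0 b (z.1.1.1 z.2) :=
      (measurable_gaussianPDF 0 b).comp (measurable_ev_comp (f := fun z : (Pth × ℝ) × ℝ => z.1.1)
        (g := fun z => z.2) (by fun_prop) (by fun_prop))
    exact h1.mul h2
  rw [lintegral_lintegral_swap
    (f := fun (w : Pth) (s : ℝ) => ∫⁻ u in Ico p q, gaussianPDF 0 a (w.1 s) * gaussianPDF 0 b (w.1 u))]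
  · refine lintegral_congr fun s => ?_
    rw [lintegral_lintegral_swap
      (f := fun (w : Pth) (u : ℝ) => gaussianPDF 0 a (w.1 s) * gaussianPDF 0 b (w.1 u))]
    · exact lintegral_congr fun u => two_pt hW ha hb s u
    · exact (m3.comp (f := fun z : Pth × ℝ => ((z.1, s), z.2)) (by fun_prop)).aemeasurable
  · exact (Measurable.lintegral_prod_right' m3).aemeasurable

lemma hilbert_cauchy {H : Type*} [NormedAddCommGroup H] [InnerProductSpace ℝ H] (x : ℕ → H)
    (c : ℕ → ℝ≥0) (hc : ∀ n, 0 < c n) (hanti : Antitone c) (G : ℝ≥0 → ℝ)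
    (hG : ∀ a b, 0 < a → a ≤ b → G b ≤ G a) (C : ℝ) (hC : ∀ a, G a ≤ C)
    (hin : ∀ n m, inner ℝ (x n) (x m) = G (c n + c m)) : CauchySeq x := by
  have hmono : Monotone fun n => G (c n + c n) := fun n m h =>
    hG _ _ (add_pos (hc _) (hc _)) (add_le_add (hanti h) (hanti h))
  have hbdd : BddAbove (range fun n => G (c n + c n)) := ⟨C, by rintro _ ⟨n, rfl⟩; exact hC _⟩
  have hlim := tendsto_atTop_ciSup hmono hbdd
  set L := ⨆ n, G (c n + c n) with hL
  have hle : ∀ n m, G (c n + c m) ≤ L := by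
    intro n m
    refine le_trans ?_ (le_ciSup hbdd (max n m))
    exact hG _ _ (add_pos (hc _) (hc _))
      (add_le_add (hanti (le_max_left _ _)) (hanti (le_max_right _ _)))
  rw [Metric.cauchySeq_iff]
  intro ε hε
  obtain ⟨N, hN⟩ := Metric.tendsto_atTop.1 hlim (ε ^ 2 / 2) (by positivity)
  refine ⟨N, fun m hm n hn => ?_⟩
  have h1 := hN N le_rfl
  rw [Real.dist_eq, abs_lt] at h1
  have h2 : G (c N + c N) ≤ G (c m + c n) := hG _ _ (add_pos (hc _) (hc _))
      (add_le_add (hanti hm) (hanti hn))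
  have h3 : ‖x m - x n‖ ^ 2 = G (c m + c m) - 2 * G (c m + c n) + G (c n + c n) := by
    rw [← hin, ← hin, ← hin, real_inner_self_eq_norm_sq, real_inner_self_eq_norm_sq,
      norm_sub_sq_real]
  rw [dist_eq_norm]
  have h4 := hle m m
  have h5 := hle n n
  have : ‖x m - x n‖ ^ 2 < ε ^ 2 := by rw [h3]; linarith [h1.1, h1.2]
  exact lt_of_pow_lt_pow_left₀ 2 hε.le this



/-- Law of the path recentred to have a zero at a uniform time of `[p,q)`. -/
noncomputable def occ (W : Measure Pth) (p q : ℝ) : Measure Pth :=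
  ((volume.restrict (Ico p q)).prod W).map (fun z : ℝ × Pth => th (-z.1) z.2)

lemma measurable_thneg : Measurable (fun z : ℝ × Pth => th (-z.1) z.2) :=
  measurable_th_comp measurable_snd measurable_fst.neg

lemma lintegral_occ {W : Measure Pth} [IsProbabilityMeasure W] {F : Pth → ℝ≥0∞}
    (hF : Measurable F) (p q : ℝ) :
    ∫⁻ w, F w ∂occ W p q = ∫⁻ s in Ico p q, ∫⁻ w, F (th (-s) w) ∂W := by
  rw [occ, lintegral_map hF measurable_thneg,
    lintegral_prod (fun z : ℝ × Pth => F (th (-z.1) z.2)) (hF.comp measurable_thneg).aemeasurable]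

instance {W : Measure Pth} [IsProbabilityMeasure W] (p q : ℝ) : IsFiniteMeasure (occ W p q) := by
  unfold occ; infer_instance

lemma lintegral_fE_mul {W : Measure Pth} (hW : IsBMLaw W) (p q : ℝ) {c : ℝ≥0} (hc : 0 < c)
    {h : Pth → ℝ≥0∞} (hh : Measurable h) :
    ∫⁻ w, fE p q c w * h w ∂(muM W)
      = ∫⁻ z, ∫⁻ w, h (tr (√c * z) w) ∂(occ W p q) ∂(gaussianReal 0 1) := by
  have := hW.prob
  have := sigmaFinite_muM hW
  have e1 : ∀ w, fE p q c w * h w = ∫⁻ s in Ico p q, gaussianPDF 0 c (w.1 s) * h w := by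
    intro w
    rw [lintegral_mul_const (f := fun s => gaussianPDF 0 c (w.1 s)) _
      ((measurable_gaussianPDF 0 c).comp w.2.measurable)]
    rfl
  simp_rw [e1]
  rw [lintegral_lintegral_swap (f := fun (w : Pth) (s : ℝ) => gaussianPDF 0 c (w.1 s) * h w)]
  swap
  · exact (((measurable_gev c).comp measurable_swap).mul (hh.comp measurable_fst)).aemeasurable
  have e2 : ∀ s : ℝ, ∫⁻ w, gaussianPDF 0 c (w.1 s) * h w ∂(muM W)
      = ∫⁻ x, gaussianPDF 0 c x * ∫⁻ w, h (tr x (th (-s) w)) ∂W := by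
    intro s
    have mk : Measurable (fun w : Pth => gaussianPDF 0 c (w.1 0) * h (th (-s) w)) :=
      ((measurable_gaussianPDF 0 c).comp (measurable_evt 0)).mul (hh.comp (measurable_thc (-s)))
    have := (mp_th hW s).lintegral_comp mk
    simp only [th_apply, add_zero, th_th, add_neg_cancel, th_zero] at this
    rw [this, lintegral_muM mk]
    refine lintegral_congr fun x => ?_
    rw [← lintegral_const_mul (f := fun w => h (tr x (th (-s) w))) _
      (hh.comp ((measurable_trc x).comp (measurable_thc (-s))))]
    refine lintegral_congr_ae ?_
    filter_upwards [hW.zero] with w hw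
    simp [hw, th_tr]
  simp_rw [e2]
  have mq : Measurable (fun z : ℝ × ℝ × Pth => h (tr z.2.1 (th (-z.1) z.2.2))) :=
    hh.comp (measurable_tr_comp (measurable_th_comp (by fun_prop) (by fun_prop)) (by fun_prop))
  have mq2 : Measurable (fun z : ℝ × ℝ => ∫⁻ w, h (tr z.2 (th (-z.1) w)) ∂W) :=
    Measurable.lintegral_prod_right' (f := fun z : (ℝ × ℝ) × Pth => h (tr z.1.2 (th (-z.1.1) z.2)))
      (mq.comp (f := fun z : (ℝ × ℝ) × Pth => (z.1.1, z.1.2, z.2)) (by fun_prop))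
  rw [lintegral_lintegral_swap (f := fun (s : ℝ) (x : ℝ) => gaussianPDF 0 c x * ∫⁻ w, h (tr x (th (-s) w)) ∂W)]
  swap
  · exact (((measurable_gaussianPDF 0 c).comp measurable_snd).mul mq2).aemeasurable
  have e3 : ∀ x : ℝ, ∫⁻ s in Ico p q, gaussianPDF 0 c x * ∫⁻ w, h (tr x (th (-s) w)) ∂W
      = gaussianPDF 0 c x * ∫⁻ w, h (tr x w) ∂(occ W p q) := by
    intro x
    rw [lintegral_const_mul, lintegral_occ (F := fun w => h (tr x w)) (hh.comp (measurable_trc x))]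
    exact mq2.comp (f := fun s : ℝ => (s, x)) (by fun_prop)
  simp_rw [e3]
  have mr : Measurable (fun x : ℝ => ∫⁻ w, h (tr x w) ∂(occ W p q)) :=
    Measurable.lintegral_prod_right' (f := fun z : ℝ × Pth => h (tr z.1 z.2)) (hh.comp measurable_tr)
  have e4 := lintegral_withDensity_eq_lintegral_mul volume (measurable_gaussianPDF 0 c) mr
  simp only [Pi.mul_apply] at e4
  rw [← e4, ← gaussianReal_of_var_ne_zero _ hc.ne']
  have e5 : gaussianReal 0 c = (gaussianReal 0 1).map (fun z => √c * z) := by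
    rw [gaussianReal_map_const_mul]
    congr 1
    · simp
    · rw [mul_one]; ext; simp
  rw [e5, lintegral_map mr (by fun_prop)]

lemma tendsto_fE_mul {W : Measure Pth} (hW : IsBMLaw W) (p q : ℝ) {c : ℕ → ℝ≥0}
    (hc : ∀ n, 0 < c n) (hlim : Tendsto c atTop (𝓝 0))
    {H : Pth → ℝ} (hH : Measurable H) (C : ℝ) (hC : ∀ w, H w ≤ C)
    (hcont : ∀ w, Continuous fun x => H (tr x w)) :
    Tendsto (fun n => ∫⁻ w, fE p q (c n) w * ENNReal.ofReal (H w) ∂(muM W)) atTop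
      (𝓝 (∫⁻ w, ENNReal.ofReal (H w) ∂(occ W p q))) := by
  have := hW.prob
  have hH' : Measurable fun w => ENNReal.ofReal (H w) := hH.ennreal_ofReal
  simp_rw [fun n => lintegral_fE_mul hW p q (hc n) hH']
  have mm : ∀ n, Measurable (fun z : ℝ × Pth => ENNReal.ofReal (H (tr (√(c n) * z.1) z.2))) :=
    fun n => hH'.comp (measurable_tr_comp measurable_snd (by fun_prop))
  have e1 : ∀ n, ∫⁻ z, ∫⁻ w, ENNReal.ofReal (H (tr (√(c n) * z) w)) ∂(occ W p q) ∂(gaussianReal 0 1)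
      = ∫⁻ z, ENNReal.ofReal (H (tr (√(c n) * z.1) z.2)) ∂((gaussianReal 0 1).prod (occ W p q)) :=
    fun n => (lintegral_prod _ (mm n).aemeasurable).symm
  have e2 : ∫⁻ w, ENNReal.ofReal (H w) ∂(occ W p q)
      = ∫⁻ z, ENNReal.ofReal (H z.2) ∂((gaussianReal 0 1).prod (occ W p q)) := by
    rw [lintegral_prod (fun z : ℝ × Pth => ENNReal.ofReal (H z.2)) (hH'.comp measurable_snd).aemeasurable]
    simp
  simp_rw [e1, e2]
  refine tendsto_lintegral_of_dominated_convergence (fun _ => ENNReal.ofReal C) mm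
    (fun n => ae_of_all _ fun z => ENNReal.ofReal_le_ofReal (hC _)) ?_ (ae_of_all _ fun z => ?_)
  · rw [lintegral_const]
    exact ENNReal.mul_ne_top ENNReal.ofReal_ne_top (measure_ne_top _ _)
  · refine (ENNReal.continuous_ofReal.tendsto _).comp ?_
    have h0 : Tendsto (fun n => √(c n) * z.1) atTop (𝓝 0) := by
      have : Tendsto (fun n => √((c n : ℝ)) * z.1) atTop (𝓝 (√((0:ℝ≥0):ℝ) * z.1)) :=
        ((Real.continuous_sqrt.tendsto _).comp
          ((NNReal.continuous_coe.tendsto _).comp hlim)).mul_const _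
      simpa using this
    have := ((hcont z.2).tendsto 0).comp h0
    have e : tr 0 z.2 = z.2 := by apply Subtype.ext; funext u; simp
    rw [e] at this
    exact this

lemma exists_density {W : Measure Pth} (hW : IsBMLaw W) (p q : ℝ) :
    ∃ F : Pth → ℝ≥0∞, Measurable F ∧ occ W p q = (muM W).withDensity F ∧
      ∫⁻ w, F w ^ 2 ∂(muM W) ≤ ENNReal.ofReal (4 * (q - p) * √(q - p)) := by
  have := hW.prob
  have := sigmaFinite_muM hW
  set μ := muM W with hμ
  set c : ℕ → ℝ≥0 := fun n => 1 / ((n : ℝ≥0) + 1) with hcdef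
  have hc : ∀ n, 0 < c n := fun n => by positivity
  have hanti : Antitone c := fun n m h => by
    simp only [hcdef]; gcongr
  have hlim : Tendsto c atTop (𝓝 0) := tendsto_one_div_add_atTop_nhds_zero_nat
  set f : ℕ → Pth → ℝ := fun n w => (fE p q (c n) w).toReal with hf
  have hfm : ∀ n, Measurable (f n) := fun n => (measurable_fE p q (c n)).ennreal_toReal
  have hGtop : ∀ a, Gam p q a ≠ ∞ := fun a => ((Gam_le p q a).trans_lt ENNReal.ofReal_lt_top).ne
  have hmulm : ∀ n m, Measurable fun w => fE p q (c n) w * fE p q (c m) w := fun n m =>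
    (measurable_fE p q (c n)).mul (measurable_fE p q (c m))
  have hL2 : ∀ n, MemLp (f n) 2 μ := by
    intro n
    rw [memLp_two_iff_integrable_sq (hfm n).aestronglyMeasurable]
    have : (fun w => f n w ^ 2) = fun w => (fE p q (c n) w * fE p q (c n) w).toReal := by
      funext w; simp [hf, sq, ENNReal.toReal_mul]
    rw [this]
    refine integrable_toReal_of_lintegral_ne_top (hmulm n n).aemeasurable ?_
    rw [fE_mul hW (hc n) (hc n)]; exact hGtop _
  set x : ℕ → Lp ℝ 2 μ := fun n => (hL2 n).toLp with hx
  have hin : ∀ n m, inner ℝ (x n) (x m) = (Gam p q (c n + c m)).toReal := by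
    intro n m
    rw [L2.inner_def, ← fE_mul hW (hc n) (hc m), ← integral_toReal (hmulm n m).aemeasurable]
    · refine integral_congr_ae ?_
      filter_upwards [(hL2 n).coeFn_toLp, (hL2 m).coeFn_toLp] with w h1 h2
      simp only [hx, h1, h2]
      simp [hf, ENNReal.toReal_mul, mul_comm]
    · exact ae_of_all _ fun w => ENNReal.mul_lt_top (fE_lt_top _ _ _ _) (fE_lt_top _ _ _ _)
  have hbd : ∀ a, (Gam p q a).toReal ≤ (ENNReal.ofReal (4 * (q - p) * √(q - p))).toReal :=
    fun a => ENNReal.toReal_mono ENNReal.ofReal_ne_top (Gam_le p q a)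
  have hcau : CauchySeq x := hilbert_cauchy x c hc hanti (fun a => (Gam p q a).toReal)
    (fun a b ha hab => ENNReal.toReal_mono (hGtop _) (Gam_anti p q ha hab)) _ hbd hin
  obtain ⟨X, hX⟩ := cauchySeq_tendsto_of_complete hcau
  have hXpos : ∀ᵐ w ∂μ, 0 ≤ X w := by
    have h1 : ∀ n, Lp.posPart (x n) = x n := by
      intro n
      apply Lp.ext
      filter_upwards [Lp.coeFn_posPart (x n), (hL2 n).coeFn_toLp] with w h1 h2
      rw [h1]
      apply max_eq_left
      simp only [hx, h2]
      exact ENNReal.toReal_nonneg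
    have h2 : Tendsto (fun n => Lp.posPart (x n)) atTop (𝓝 (Lp.posPart X)) :=
      (Lp.continuous_posPart.tendsto X).comp hX
    simp_rw [h1] at h2
    have h3 := tendsto_nhds_unique hX h2
    filter_upwards [Lp.coeFn_posPart X] with w h
    rw [h3, h]
    exact le_max_right _ _
  have hXm : Measurable X := (Lp.stronglyMeasurable X).measurable
  set F : Pth → ℝ≥0∞ := fun w => ENNReal.ofReal (X w) with hF
  have hFm : Measurable F := hXm.ennreal_ofReal
  have hXnorm : ‖X‖ ^ 2 ≤ (ENNReal.ofReal (4 * (q - p) * √(q - p))).toReal := by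
    refine le_of_tendsto ((hX.norm).pow 2) (Eventually.of_forall fun n => ?_)
    rw [← real_inner_self_eq_norm_sq, hin]
    exact hbd _
  have hF2 : ∫⁻ w, F w ^ 2 ∂μ ≤ ENNReal.ofReal (4 * (q - p) * √(q - p)) := by
    have h1 : Integrable (fun w => X w ^ 2) μ :=
      (memLp_two_iff_integrable_sq (Lp.stronglyMeasurable X).aestronglyMeasurable).1 (Lp.memLp X)
    have h2 : ∫⁻ w, F w ^ 2 ∂μ = ENNReal.ofReal (∫ w, X w ^ 2 ∂μ) := by
      rw [ofReal_integral_eq_lintegral_ofReal h1 (ae_of_all _ fun w => sq_nonneg _)]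
      refine lintegral_congr_ae ?_
      filter_upwards [hXpos] with w h
      simp only [hF]
      rw [ENNReal.ofReal_pow h]
    have h3 : ∫ w, X w ^ 2 ∂μ = ‖X‖ ^ 2 := by
      rw [← real_inner_self_eq_norm_sq, L2.inner_def]
      congr 1; funext w; simp [sq]
    rw [h2, h3]
    exact ENNReal.ofReal_le_of_le_toReal hXnorm
  -- key identity on test functions
  have key : ∀ (g : Pth → ℝ) (C : ℝ), Measurable g → (∀ w, 0 ≤ g w) → (∀ w, g w ≤ C) →
      (∀ w, Continuous fun x => g (tr x w)) →
      ∫⁻ w, F w * ENNReal.ofReal (g w * gaussianPDFReal 0 1 (w.1 0)) ∂μ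
        = ∫⁻ w, ENNReal.ofReal (g w * gaussianPDFReal 0 1 (w.1 0)) ∂(occ W p q) := by
    intro g C hg hg0 hgC hgc
    set H : Pth → ℝ := fun w => g w * gaussianPDFReal 0 1 (w.1 0) with hHdef
    have hψ1 : ∀ y, gaussianPDFReal 0 1 y ≤ 1 := by
      intro y
      simp only [gaussianPDFReal]
      have a1 : (√(2 * Real.pi * (1:ℝ≥0)))⁻¹ ≤ 1 := by
        apply inv_le_one_of_one_le₀
        rw [Real.one_le_sqrt]
        have := Real.pi_gt_three
        push_cast; linarith
      have a2 : Real.exp (-(y - 0) ^ 2 / (2 * (1:ℝ≥0))) ≤ 1 := by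
        apply Real.exp_le_one_iff.2
        push_cast
        nlinarith [sq_nonneg (y - 0)]
      exact mul_le_one₀ a1 (Real.exp_pos _).le a2
    have hHm : Measurable H := hg.mul ((measurable_gaussianPDFReal 0 1).comp (measurable_evt 0))
    have hH0 : ∀ w, 0 ≤ H w := fun w => mul_nonneg (hg0 w) (gaussianPDFReal_nonneg _ _ _)
    have hHC : ∀ w, H w ≤ C := fun w => by
      have := hψ1 (w.1 0)
      have h0 := gaussianPDFReal_nonneg 0 1 (w.1 0)
      have := hg0 w
      have := hgC w
      simp only [hHdef]; nlinarith
    have hHc : ∀ w, Continuous fun x => H (tr x w) := by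
      intro w
      refine (hgc w).mul ?_
      simp only [tr_apply]
      unfold gaussianPDFReal
      fun_prop
    have hC0 : 0 ≤ C := (hg0 (⟨fun _ => 0, by fun_prop⟩)).trans (hgC _)
    have hHL2 : MemLp H 2 μ := by
      rw [memLp_two_iff_integrable_sq hHm.aestronglyMeasurable]
      refine ⟨(hHm.pow_const 2).aestronglyMeasurable, ?_⟩
      rw [hasFiniteIntegral_iff_ofReal (ae_of_all _ fun w => sq_nonneg _)]
      have : ∀ w, ENNReal.ofReal (H w ^ 2) ≤ ENNReal.ofReal (C ^ 2) * gaussianPDF 0 1 (w.1 0) := by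
        intro w
        rw [gaussianPDF, ← ENNReal.ofReal_mul (by positivity)]
        apply ENNReal.ofReal_le_ofReal
        have h0 := gaussianPDFReal_nonneg 0 1 (w.1 0)
        simp only [hHdef]
        rw [mul_pow]
        have b1 : g w ^ 2 ≤ C ^ 2 := pow_le_pow_left₀ (hg0 w) (hgC w) 2
        have b2 : gaussianPDFReal 0 1 (w.1 0) ^ 2 ≤ gaussianPDFReal 0 1 (w.1 0) := by
          have := hψ1 (w.1 0); nlinarith
        exact mul_le_mul b1 b2 (by positivity) (by positivity)
      refine (lintegral_mono this).trans_lt ?_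
      rw [lintegral_const_mul (f := fun w : Pth => gaussianPDF 0 1 (w.1 0)) _
          ((measurable_gaussianPDF 0 1).comp (measurable_evt 0)),
        one_pt hW (measurable_gaussianPDF 0 1) 0, lintegral_gaussianPDF_eq_one _ one_ne_zero, mul_one]
      exact ENNReal.ofReal_lt_top
    have t1 : Tendsto (fun n => inner ℝ (x n) hHL2.toLp) atTop (𝓝 (inner ℝ X hHL2.toLp)) :=
      hX.inner tendsto_const_nhds
    have t2 := tendsto_fE_mul hW p q hc hlim hHm C hHC hHc
    have hfin : ∫⁻ w, ENNReal.ofReal (H w) ∂(occ W p q) ≠ ∞ := by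
      refine ((lintegral_mono fun w => ENNReal.ofReal_le_ofReal (hHC w)).trans_lt ?_).ne
      rw [lintegral_const]
      exact ENNReal.mul_lt_top ENNReal.ofReal_lt_top (measure_lt_top _ _)
    have t3 := (ENNReal.tendsto_toReal hfin).comp t2
    have e1 : ∀ n, inner ℝ (x n) hHL2.toLp
        = (∫⁻ w, fE p q (c n) w * ENNReal.ofReal (H w) ∂μ).toReal := by
      intro n
      rw [L2.inner_def, ← integral_toReal]
      · refine integral_congr_ae ?_
        filter_upwards [(hL2 n).coeFn_toLp, hHL2.coeFn_toLp] with w h1 h2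
        simp only [hx, h1, h2]
        simp [hf, ENNReal.toReal_mul, mul_comm, hH0]
      · exact ((measurable_fE p q (c n)).mul hHm.ennreal_ofReal).aemeasurable
      · exact ae_of_all _ fun w => ENNReal.mul_lt_top (fE_lt_top _ _ _ _) ENNReal.ofReal_lt_top
    simp_rw [e1] at t1
    have e2 : inner ℝ X hHL2.toLp = (∫⁻ w, ENNReal.ofReal (H w) ∂(occ W p q)).toReal :=
      tendsto_nhds_unique t1 t3
    have e3 : inner ℝ X hHL2.toLp = ∫ w, X w * H w ∂μ := by
      rw [L2.inner_def]
      refine integral_congr_ae ?_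
      filter_upwards [hHL2.coeFn_toLp] with w h2
      simp only [h2]
      simp [mul_comm]
    have hIntg : Integrable (fun w => X w * H w) μ := (Lp.memLp X).integrable_mul hHL2
    calc ∫⁻ w, F w * ENNReal.ofReal (H w) ∂μ = ∫⁻ w, ENNReal.ofReal (X w * H w) ∂μ := by
          refine lintegral_congr_ae ?_
          filter_upwards [hXpos] with w h
          simp only [hF]
          rw [ENNReal.ofReal_mul h]
      _ = ENNReal.ofReal (∫ w, X w * H w ∂μ) := by
          rw [ofReal_integral_eq_lintegral_ofReal hIntg]
          filter_upwards [hXpos] with w h using mul_nonneg h (hH0 w)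
      _ = _ := by rw [← e3, e2, ENNReal.ofReal_toReal hfin]
  refine ⟨F, hFm, ?_, hF2⟩
  set ψ : Pth → ℝ≥0∞ := fun w => gaussianPDF 0 1 (w.1 0) with hψ
  have hψm : Measurable ψ := (measurable_gaussianPDF 0 1).comp (measurable_evt 0)
  have key2 : ∀ (g : Pth → ℝ) (C : ℝ), Measurable g → (∀ w, 0 ≤ g w) → (∀ w, g w ≤ C) →
      (∀ w, Continuous fun x => g (tr x w)) →
      ∫⁻ w, ENNReal.ofReal (g w) ∂((μ.withDensity F).withDensity ψ)
        = ∫⁻ w, ENNReal.ofReal (g w) ∂((occ W p q).withDensity ψ) := by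
    intro g C hg hg0 hgC hgc
    have hgm := hg.ennreal_ofReal
    rw [lintegral_withDensity_eq_lintegral_mul _ hψm hgm,
      lintegral_withDensity_eq_lintegral_mul _ hψm hgm,
      lintegral_withDensity_eq_lintegral_mul _ hFm (hψm.mul hgm)]
    have := key g C hg hg0 hgC hgc
    simp_rw [fun w => ENNReal.ofReal_mul (q := gaussianPDFReal 0 1 (w.1 0)) (hg0 w)] at this
    simp only [Pi.mul_apply, hψ, gaussianPDF, mul_comm (ENNReal.ofReal (gaussianPDFReal _ _ _))]
    exact this
  have hψfin : ∀ {m : Measure Pth}, (∫⁻ w, ENNReal.ofReal ((fun _ => (1:ℝ)) w) ∂m ≠ ∞) →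
      IsFiniteMeasure m := by
    intro m h
    refine ⟨?_⟩
    simpa [lt_top_iff_ne_top] using h
  have hfin1 : IsFiniteMeasure ((occ W p q).withDensity ψ) := by
    refine isFiniteMeasure_withDensity ?_
    have : ∀ w, ψ w ≤ ENNReal.ofReal ((√(2 * Real.pi * (1:ℝ≥0)))⁻¹) := by
      intro w
      simp only [hψ, gaussianPDF, gaussianPDFReal]
      apply ENNReal.ofReal_le_ofReal
      apply mul_le_of_le_one_right (by positivity)
      apply Real.exp_le_one_iff.2
      push_cast
      nlinarith [sq_nonneg (w.1 0 - 0)]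
    refine ((lintegral_mono this).trans_lt ?_).ne
    rw [lintegral_const]
    exact ENNReal.mul_lt_top ENNReal.ofReal_lt_top (measure_lt_top _ _)
  have hfin2 : IsFiniteMeasure ((μ.withDensity F).withDensity ψ) := by
    refine hψfin ?_
    rw [key2 (fun _ => 1) 1 measurable_const (by simp) (by simp) (by intro; fun_prop)]
    simp only [ENNReal.ofReal_one, lintegral_const, one_mul]
    exact measure_ne_top _ _
  have heq : (occ W p q).withDensity ψ = (μ.withDensity F).withDensity ψ := by
    refine pth_ext fun I => ?_
    have hr : Measurable (fun w : Pth => I.restrict w.1) :=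
      (Finset.measurable_restrict I).comp measurable_subtype_coe
    refine ext_of_forall_lintegral_eq_of_IsFiniteMeasure fun g => ?_
    have hgm : Measurable fun y => (g y : ℝ≥0∞) := by
      have := g.continuous.measurable
      exact this.coe_nnreal_ennreal
    rw [lintegral_map hgm hr, lintegral_map hgm hr]
    obtain ⟨C, hC⟩ : ∃ C : ℝ, ∀ y, (g y : ℝ) ≤ C := by
      refine ⟨nndist g 0, fun y => ?_⟩
      have := BoundedContinuousFunction.NNReal.upper_bound g y
      exact_mod_cast this
    have := key2 (fun w => (g (I.restrict w.1) : ℝ)) C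
      (measurable_coe_nnreal_real.comp (g.continuous.measurable.comp hr)) (fun w => NNReal.coe_nonneg _)
      (fun w => hC _) (fun w => by
        refine NNReal.continuous_coe.comp (g.continuous.comp ?_)
        refine continuous_pi fun i => ?_
        simp only [Finset.restrict, tr_apply]
        fun_prop)
    simpa using this.symm
  have hne : ∀ w, ψ w ≠ 0 := fun w => (gaussianPDF_pos 0 one_ne_zero _).ne'
  have hnt : ∀ w, ψ w ≠ ∞ := fun w => gaussianPDF_ne_top
  rw [← withDensity_inv_same (μ := occ W p q) hψm (ae_of_all _ hne) (ae_of_all _ hnt), heq,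
    withDensity_inv_same hψm (ae_of_all _ hne) (ae_of_all _ hnt)]



/-- `L` is the kernel disintegrating the zeros-Palm measure. -/
def Dis (W : Measure Pth) (L : Kernel Pth ℝ) : Prop :=
  ∀ G : Pth × ℝ → ℝ≥0∞, Measurable G →
    ∫⁻ w, ∫⁻ s, G (w, s) ∂(L w) ∂(muM W) = ∫⁻ s : ℝ, ∫⁻ v, G (th (-s) v, s) ∂W

lemma null_th {W : Measure Pth} (hW : IsBMLaw W) {E : Set Pth} (hE : MeasurableSet E)
    (h0 : muM W E = 0) : ∀ᵐ s : ℝ, W {v | th (-s) v ∈ E} = 0 := by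
  have := hW.prob
  have key : ∀ n : ℕ, ∀ᵐ s : ℝ ∂(volume.restrict (Ico (-(n:ℝ)) n)), W {v | th (-s) v ∈ E} = 0 := by
    intro n
    obtain ⟨F, hF, hoc, -⟩ := exists_density hW (-(n:ℝ)) n
    have h1 : occ W (-(n:ℝ)) n E = 0 := by
      rw [hoc]; exact withDensity_absolutelyContinuous _ _ h0
    have h2 : occ W (-(n:ℝ)) n E = ∫⁻ s in Ico (-(n:ℝ)) n, W {v | th (-s) v ∈ E} := by
      rw [← lintegral_indicator_one hE, lintegral_occ (measurable_one.indicator hE)]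
      refine lintegral_congr fun s => ?_
      exact lintegral_indicator_one (μ := W) (measurable_thc (-s) hE)
    have hm : Measurable (fun s : ℝ => W {v | th (-s) v ∈ E}) :=
      measurable_measure_prodMk_left (measurable_thneg hE)
    rw [h2, lintegral_eq_zero_iff hm] at h1
    exact h1
  have h3 : ∀ᵐ s : ℝ, ∀ n : ℕ, s ∈ Ico (-(n:ℝ)) n → W {v | th (-s) v ∈ E} = 0 :=
    ae_all_iff.2 fun n => (ae_restrict_iff' measurableSet_Ico).1 (key n)
  filter_upwards [h3] with s hs
  obtain ⟨n, hn⟩ := exists_nat_gt |s|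
  exact hs n ⟨by linarith [neg_abs_le s], by linarith [le_abs_self s]⟩

lemma qmp {W : Measure Pth} (hW : IsBMLaw W) {p : Pth → Prop} (h : ∀ᵐ w ∂(muM W), p w) :
    ∀ᵐ s : ℝ, ∀ᵐ v ∂W, p (th (-s) v) := by
  obtain ⟨E, hE1, hE2, hE3⟩ := exists_measurable_superset_of_null (ae_iff.1 h)
  filter_upwards [null_th hW hE2 hE3] with s hs
  rw [ae_iff]
  exact measure_mono_null (fun v (hv : ¬ p (th (-s) v)) => hE1 (a := th (-s) v) hv) hs

lemma exists_dis {W : Measure Pth} (hW : IsBMLaw W) :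
    ∃ L : Kernel Pth ℝ, IsSFiniteKernel L ∧ Dis W L := by
  have := hW.prob
  have := sigmaFinite_muM hW
  set γ := gaussianReal 0 1 with hγ
  have mφ : Measurable (fun z : ℝ × Pth => (th (-z.1) z.2, z.1)) :=
    measurable_thneg.prodMk measurable_fst
  set M : Measure (Pth × ℝ) := (γ.prod W).map (fun z : ℝ × Pth => (th (-z.1) z.2, z.1)) with hM
  have : IsProbabilityMeasure M := Measure.isProbabilityMeasure_map mφ.aemeasurable
  have hac : M.fst ≪ muM W := by
    refine Measure.AbsolutelyContinuous.mk fun E hE h0 => ?_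
    rw [Measure.fst_apply hE, hM, Measure.map_apply mφ (measurable_fst hE),
      Measure.prod_apply (mφ (measurable_fst hE))]
    refine (lintegral_eq_zero_iff (measurable_measure_prodMk_left (mφ (measurable_fst hE)))).2 ?_
    exact (gaussianReal_absolutelyContinuous 0 one_ne_zero).ae_le (null_th hW hE h0)
  set f := M.fst.rnDeriv (muM W) with hf
  have hfm : Measurable f := Measure.measurable_rnDeriv _ _
  have hfw : (muM W).withDensity f = M.fst := Measure.withDensity_rnDeriv_eq _ _ hac
  have hft : ∀ᵐ w ∂(muM W), f w < ∞ := Measure.rnDeriv_lt_top _ _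
  set g : Pth → ℝ → ℝ≥0 := fun w s => ((f w).toNNReal * ((gaussianPDF 0 1 s)⁻¹).toNNReal) with hg
  have mg : Measurable (Function.uncurry g) := by
    have := measurable_gaussianPDF 0 1
    exact ((hfm.comp measurable_fst).ennreal_toNNReal).mul
      ((this.comp measurable_snd).inv.ennreal_toNNReal)
  have mg' : Measurable (Function.uncurry fun w s => (g w s : ℝ≥0∞)) := mg.coe_nnreal_ennreal
  refine ⟨Kernel.withDensity M.condKernel (fun w s => (g w s : ℝ≥0∞)), inferInstance, ?_⟩
  intro G hG
  have hpos : ∀ s : ℝ, gaussianPDF 0 1 s ≠ 0 := fun s => (gaussianPDF_pos 0 one_ne_zero s).ne'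
  have hfin : ∀ s : ℝ, gaussianPDF 0 1 s ≠ ∞ := fun s => by simp [gaussianPDF]
  set H : Pth × ℝ → ℝ≥0∞ := fun z => (gaussianPDF 0 1 z.2)⁻¹ * G z with hH
  have mH : Measurable H := ((measurable_gaussianPDF 0 1).comp measurable_snd).inv.mul hG
  have mK : Measurable (fun w => ∫⁻ s, H (w, s) ∂(M.condKernel w)) :=
    Measurable.lintegral_kernel_prod_right' mH
  have e1 : ∫⁻ w, ∫⁻ s, G (w, s) ∂(Kernel.withDensity M.condKernel (fun w s => (g w s : ℝ≥0∞)) w)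
      ∂(muM W) = ∫⁻ w, f w * ∫⁻ s, H (w, s) ∂(M.condKernel w) ∂(muM W) := by
    refine lintegral_congr_ae ?_
    filter_upwards [hft] with w hw
    rw [Kernel.lintegral_withDensity _ mg' w (g := fun s => G (w, s)) (hG.comp measurable_prodMk_left),
      ← lintegral_const_mul (f := fun s => H (w, s)) _ (mH.comp measurable_prodMk_left)]
    refine lintegral_congr fun s => ?_
    simp only [hg, hH, ENNReal.coe_mul]
    rw [ENNReal.coe_toNNReal hw.ne, ENNReal.coe_toNNReal (ENNReal.inv_ne_top.2 (hpos s)), mul_assoc]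
  have e2 : ∫⁻ w, f w * ∫⁻ s, H (w, s) ∂(M.condKernel w) ∂(muM W)
      = ∫⁻ w, ∫⁻ s, H (w, s) ∂(M.condKernel w) ∂M.fst := by
    rw [← hfw, lintegral_withDensity_eq_lintegral_mul _ hfm mK]; rfl
  have e3 : ∫⁻ w, ∫⁻ s, H (w, s) ∂(M.condKernel w) ∂M.fst = ∫⁻ z, H z ∂M := by
    rw [← Measure.lintegral_compProd mH, Measure.disintegrate]
  have e4 : ∫⁻ z, H z ∂M = ∫⁻ s, ∫⁻ v, H (th (-s) v, s) ∂W ∂γ := by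
    rw [hM, lintegral_map mH mφ, lintegral_prod (fun z : ℝ × Pth => H (th (-z.1) z.2, z.1))
      (mH.comp mφ).aemeasurable]
  have mI : Measurable (fun s : ℝ => ∫⁻ v, H (th (-s) v, s) ∂W) :=
    Measurable.lintegral_prod_right' (f := fun z : ℝ × Pth => H (th (-z.1) z.2, z.1)) (mH.comp mφ)
  rw [e1, e2, e3, e4, hγ, gaussianReal_of_var_ne_zero _ one_ne_zero,
    lintegral_withDensity_eq_lintegral_mul _ (measurable_gaussianPDF 0 1) mI]
  refine lintegral_congr fun s => ?_
  simp only [Pi.mul_apply, hH]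
  rw [lintegral_const_mul (f := fun v => G (th (-s) v, s)) _
    (hG.comp ((measurable_thc (-s)).prodMk measurable_const)), ← mul_assoc,
    ENNReal.mul_inv_cancel (hpos s) (hfin s), one_mul]



lemma dis_mul {W : Measure Pth} {L : Kernel Pth ℝ} (hL : Dis W L)
    {h : Pth → ℝ≥0∞} (hh : Measurable h) {I : Set ℝ} (hI : MeasurableSet I) :
    ∫⁻ w, h w * L w I ∂(muM W) = ∫⁻ s in I, ∫⁻ v, h (th (-s) v) ∂W := by
  have := hL (fun z => h z.1 * I.indicator 1 z.2)
    ((hh.comp measurable_fst).mul ((measurable_one.indicator hI).comp measurable_snd))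
  simp only at this
  have e : ∀ w, ∫⁻ s, h w * I.indicator 1 s ∂(L w) = h w * L w I := fun w => by
    rw [lintegral_const_mul _ (measurable_one.indicator hI), lintegral_indicator_one hI]
  simp_rw [e] at this
  rw [this, ← lintegral_indicator hI]
  refine lintegral_congr fun s => ?_
  by_cases hs : s ∈ I <;> simp [hs]

lemma dis_set {W : Measure Pth} {L : Kernel Pth ℝ} (hL : Dis W L)
    {E : Set Pth} (hE : MeasurableSet E) {I : Set ℝ} (hI : MeasurableSet I) :
    ∫⁻ w in E, L w I ∂(muM W) = ∫⁻ s in I, W (th (-s) ⁻¹' E) := by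
  have := dis_mul hL (h := E.indicator 1) (measurable_one.indicator hE) hI
  rw [← lintegral_indicator hE]
  convert this using 1
  · refine lintegral_congr fun w => ?_
    by_cases hs : w ∈ E <;> simp [hs]
  · refine lintegral_congr fun s => ?_
    exact (lintegral_indicator_one (μ := W) (measurable_thc (-s) hE)).symm

lemma dis_tot {W : Measure Pth} (hW : IsBMLaw W) {L : Kernel Pth ℝ} (hL : Dis W L)
    {I : Set ℝ} (hI : MeasurableSet I) :
    ∫⁻ w, L w I ∂(muM W) = volume I := by
  have := hW.prob
  have := dis_set hL MeasurableSet.univ hI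
  simpa using this

lemma dis_locfin {W : Measure Pth} (hW : IsBMLaw W) {L : Kernel Pth ℝ} (hL : Dis W L) :
    ∀ᵐ w ∂(muM W), IsLocallyFiniteMeasure (L w) := by
  have : ∀ᵐ w ∂(muM W), ∀ n : ℕ, L w (Ioo (-(n:ℝ)) n) < ∞ := by
    refine ae_all_iff.2 fun n => ae_lt_top (Kernel.measurable_coe L measurableSet_Ioo) ?_
    rw [dis_tot hW hL measurableSet_Ioo]; simp
  filter_upwards [this] with w hw
  refine ⟨fun x => ?_⟩
  obtain ⟨n, hn⟩ := exists_nat_gt |x|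
  exact ⟨Ioo (-(n:ℝ)) n, Ioo_mem_nhds (by linarith [neg_abs_le x]) (by linarith [le_abs_self x]), hw n⟩

lemma dis_sq {W : Measure Pth} (hW : IsBMLaw W) {L : Kernel Pth ℝ} (hL : Dis W L) (p q : ℝ) :
    ∫⁻ w, (L w (Ico p q)) ^ 2 ∂(muM W) ≤ ENNReal.ofReal (4 * (q - p) * √(q - p)) := by
  have := hW.prob
  have := sigmaFinite_muM hW
  obtain ⟨F, hF, hoc, hb⟩ := exists_density hW p q
  have : (fun w => L w (Ico p q)) =ᵐ[muM W] F := by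
    refine ae_eq_of_forall_setLIntegral_eq_of_sigmaFinite
      (Kernel.measurable_coe L measurableSet_Ico) hF fun E hE _ => ?_
    rw [dis_set hL hE measurableSet_Ico, ← withDensity_apply _ hE, ← hoc,
      ← lintegral_indicator_one hE, lintegral_occ (measurable_one.indicator hE)]
    refine lintegral_congr fun s => ?_
    exact (lintegral_indicator_one (μ := W) (measurable_thc (-s) hE)).symm
  refine le_trans (le_of_eq ?_) hb
  refine lintegral_congr_ae ?_
  filter_upwards [this] with w hw
  rw [hw]

lemma dis_noatom {W : Measure Pth} (hW : IsBMLaw W) {L : Kernel Pth ℝ} (hL : Dis W L) :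
    ∀ᵐ w ∂(muM W), NullSingletonClass (L w) := by
  have key : ∀ k : ℤ, ∀ᵐ w ∂(muM W), ∀ s : ℝ, s ∈ Ico (k:ℝ) (k+1) → L w {s} = 0 := by
    intro k
    set I : ℕ → ℕ → Set ℝ := fun m j => Ico ((k:ℝ) + j / (m+1)^2) (k + (j+1) / (m+1)^2) with hI
    set Φ : ℕ → Pth → ℝ≥0∞ := fun m w => ∑ j ∈ Finset.range ((m+1)^2), (L w (I m j))^2 with hΦ
    have mΦ : ∀ m, Measurable (Φ m) := fun m => Finset.measurable_sum _ fun j _ =>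
      (Kernel.measurable_coe L measurableSet_Ico).pow_const 2
    have bΦ : ∀ m, ∫⁻ w, Φ m w ∂(muM W) ≤ ENNReal.ofReal (4 / (m+1)) := by
      intro m
      rw [lintegral_finsetSum _ fun j _ => (Kernel.measurable_coe L measurableSet_Ico).pow_const 2]
      have hm : (0:ℝ) < m + 1 := by positivity
      have : ∀ j ∈ Finset.range ((m+1)^2), ∫⁻ w, (L w (I m j))^2 ∂(muM W)
          ≤ ENNReal.ofReal (4 / (m+1)^3) := by
        intro j _
        refine (dis_sq hW hL _ _).trans (le_of_eq ?_)
        have : (k:ℝ) + (j+1) / (m+1)^2 - (k + j / (m+1)^2) = (1 / (m+1))^2 := by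
          field_simp; ring
        rw [this, Real.sqrt_sq (by positivity)]
        congr 1; field_simp
      refine (Finset.sum_le_sum this).trans ?_
      rw [Finset.sum_const, Finset.card_range, nsmul_eq_mul, ← ENNReal.ofReal_natCast,
        ← ENNReal.ofReal_mul (by positivity)]
      refine ENNReal.ofReal_le_ofReal (le_of_eq ?_)
      push_cast; field_simp
    have h0 : ∫⁻ w, ⨅ m, Φ m w ∂(muM W) = 0 := by
      have h1 : ∀ m : ℕ, ∫⁻ w, ⨅ m, Φ m w ∂(muM W) ≤ ENNReal.ofReal (4 / (m+1)) := fun m =>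
        (lintegral_mono fun w => iInf_le _ m).trans (bΦ m)
      have h2 : Tendsto (fun m : ℕ => ENNReal.ofReal (4 / ((m:ℝ)+1))) atTop (𝓝 0) := by
        rw [← ENNReal.ofReal_zero]
        refine ENNReal.tendsto_ofReal ?_
        have := (tendsto_one_div_add_atTop_nhds_zero_nat (𝕜 := ℝ)).const_mul 4
        simpa [div_eq_mul_inv] using this
      exact le_antisymm (ge_of_tendsto' h2 h1) (by simp)
    rw [lintegral_eq_zero_iff (Measurable.iInf mΦ)] at h0
    filter_upwards [h0] with w hw s hs
    have : (L w {s})^2 ≤ ⨅ m, Φ m w := by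
      refine le_iInf fun m => ?_
      have hm : (0:ℝ) < (m + 1)^2 := by positivity
      set j := ⌊(s - k) * (m+1)^2⌋₊ with hj
      have hnn : 0 ≤ (s - k) * (m+1)^2 := mul_nonneg (by linarith [hs.1]) hm.le
      have hj1 : (j:ℝ) ≤ (s-k) * (m+1)^2 := Nat.floor_le hnn
      have hj2 : (s-k) * (m+1)^2 < j + 1 := Nat.lt_floor_add_one _
      have hsj : s ∈ I m j := by
        constructor
        · have := (div_le_iff₀ hm).2 hj1
          linarith
        · have := (lt_div_iff₀ hm).2 hj2
          linarith
      have hjr : j ∈ Finset.range ((m+1)^2) := by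
        rw [Finset.mem_range]
        have : (j:ℝ) < (m+1)^2 := by nlinarith [hs.2]
        exact_mod_cast this
      calc (L w {s})^2 ≤ (L w (I m j))^2 := by
            gcongr
            exact singleton_subset_iff.2 hsj
        _ ≤ _ := Finset.single_le_sum (f := fun j => (L w (I m j))^2) (fun _ _ => by simp) hjr
    rw [hw] at this
    simpa using this
  filter_upwards [ae_all_iff.2 key] with w hw
  exact ⟨fun s => hw ⌊s⌋ s ⟨Int.floor_le s, Int.lt_floor_add_one s⟩⟩

lemma dis_cov {W : Measure Pth} (hW : IsBMLaw W) {L : Kernel Pth ℝ} (hL : Dis W L) (r : ℝ) :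
    ∀ᵐ w ∂(muM W), L (th r w) = (L w).map (fun x => x - r) := by
  have := hW.prob
  have := sigmaFinite_muM hW
  have key : ∀ a b : ℚ, ∀ᵐ w ∂(muM W), L (th r w) (Ioo (a:ℝ) b)
      = (L w) (Ioo (a + r) (b + r)) := by
    intro a b
    refine ae_eq_of_forall_setLIntegral_eq_of_sigmaFinite
      ((Kernel.measurable_coe L measurableSet_Ioo).comp (measurable_thc r))
      (Kernel.measurable_coe L measurableSet_Ioo) fun E hE _ => ?_
    have h1 := (mp_th hW r).setLIntegral_comp_preimage (s := th (-r) ⁻¹' E)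
      (measurable_thc (-r) hE) (Kernel.measurable_coe L (measurableSet_Ioo (a := (a:ℝ)) (b := b)))
    have e : th r ⁻¹' (th (-r) ⁻¹' E) = E := by
      ext w; simp [th_th, th_zero]
    rw [e] at h1
    refine h1.trans ?_
    rw [dis_set hL (measurable_thc (-r) hE) measurableSet_Ioo, dis_set hL hE measurableSet_Ioo]
    have e2 : Ioo (a:ℝ) b = (fun x => x + r) ⁻¹' (Ioo (a + r) (b + r)) := by
      ext x; simp
    rw [e2, ← (measurePreserving_add_right volume r).setLIntegral_comp_preimage measurableSet_Ioo
      (f := fun s => W (th (-s) ⁻¹' E)) ((measurable_measure_prodMk_left (measurable_thneg hE)).comp measurable_id)]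
    refine lintegral_congr fun s => ?_
    congr 1
    ext v
    simp [th_th, add_comm]
  filter_upwards [ae_all_iff.2 fun a => ae_all_iff.2 (key a),
    (mp_th hW r).quasiMeasurePreserving.ae (dis_locfin hW hL)] with w hw hlf
  refine Real.measure_ext_Ioo_rat fun a b => ?_
  rw [hw a b, Measure.map_apply (f := fun x : ℝ => x - r) (by fun_prop) measurableSet_Ioo]
  congr 1
  ext x; simp



lemma measurable_Lset (L : Kernel Pth ℝ) [IsSFiniteKernel L] {T : Set (ℝ × ℝ)}
    (hT : MeasurableSet T) : Measurable (fun z : Pth × ℝ => L z.1 {x | (z.2, x) ∈ T}) := by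
  have h : MeasurableSet ((fun y : (Pth × ℝ) × ℝ => (y.1.2, y.2)) ⁻¹' T) :=
    (show Measurable (fun y : (Pth × ℝ) × ℝ => (y.1.2, y.2)) by fun_prop) hT
  exact Kernel.measurable_kernel_prodMk_left (κ := Kernel.prodMkRight ℝ L) h

lemma det_bound {m : Measure ℝ} [IsLocallyFiniteMeasure m] (σ : ℝ) (n : ℕ) (a : ℝ≥0∞)
    (hA : MeasurableSet {s : ℝ | m {x | σ * s ≤ σ * x} ≤ a}) :
    m (Ico 0 (n:ℝ) ∩ {s : ℝ | m {x | σ * s ≤ σ * x} ≤ a}) ≤ a := by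
  set A := Ico 0 (n:ℝ) ∩ {s : ℝ | m {x | σ * s ≤ σ * x} ≤ a} with hAd
  have hfin : m A ≠ ∞ := ((measure_mono inter_subset_left).trans_lt measure_Ico_lt_top).ne
  rw [(measurableSet_Ico.inter hA).measure_eq_iSup_isCompact_of_ne_top hfin]
  refine iSup_le fun K => iSup_le fun hK => iSup_le fun hKc => ?_
  rcases K.eq_empty_or_nonempty with rfl | hne
  · simp
  obtain ⟨s, hs, hmin⟩ := hKc.exists_isMinOn hne (f := fun x => σ * x) (by fun_prop)
  refine (measure_mono (fun x hx => ?_)).trans (hK hs).2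
  exact hmin hx

lemma tail_neg {W : Measure Pth} (hW : IsBMLaw W) {s K : ℝ} (hs : 0 ≤ s) (hK : 0 < K) :
    W {v | K < |v.1 (-s)|} ≤ ENNReal.ofReal (s / K^2) := by
  have := hW.prob
  have mS : MeasurableSet {v : Pth | K < |v.1 (-s)|} :=
    measurableSet_lt measurable_const (measurable_evt _).abs
  have mT : MeasurableSet {x : ℝ | K < |x|} := measurableSet_lt measurable_const measurable_id.abs
  rw [← hW.shift s, Measure.map_apply (measurable_rc s) mS]
  have e : W (rc s ⁻¹' {v | K < |v.1 (-s)|}) = W ((fun w => w.1 s) ⁻¹' {x : ℝ | K < |x|}) := by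
    refine measure_congr ?_
    filter_upwards [hW.zero] with w hw
    simp only [eq_iff_iff, preimage, rc]
    change K < |(tr (-w.1 s) (th s w)).1 (-s)| ↔ K < |w.1 s|
    simp [hw]
  rw [e, ← Measure.map_apply (measurable_evt s) mT, hW.gauss s hs]
  have h := meas_ge_le_variance_div_sq (μ := gaussianReal 0 s.toNNReal) (X := fun x => x)
    (memLp_id_gaussianReal 2) hK
  rw [variance_fun_id_gaussianReal] at h
  refine (measure_mono fun x hx => ?_).trans (h.trans (le_of_eq ?_))
  · simp only [integral_id_gaussianReal, sub_zero]
    have hx' : K < |x| := hx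
    exact hx'.le
  · rw [Real.coe_toNNReal _ hs]

section recurrence
variable {W : Measure Pth} {L : Kernel Pth ℝ}

/-- one-sided local-time mass -/
noncomputable def Rf (L : Kernel Pth ℝ) (σ : ℝ) (s : ℝ) (v : Pth) : ℝ≥0∞ :=
  L (th (-s) v) {x | σ * s ≤ σ * x}

lemma measurable_Rw (L : Kernel Pth ℝ) [IsSFiniteKernel L] (σ : ℝ) :
    Measurable (fun z : Pth × ℝ => L z.1 {x | σ * z.2 ≤ σ * x}) :=
  measurable_Lset L (T := {y | σ * y.1 ≤ σ * y.2})
    (measurableSet_le (by fun_prop) (by fun_prop))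

lemma measurable_Rf (L : Kernel Pth ℝ) [IsSFiniteKernel L] (σ : ℝ) :
    Measurable (fun z : ℝ × Pth => Rf L σ z.1 z.2) :=
  (measurable_Rw L σ).comp (measurable_thneg.prodMk measurable_fst)

/-- covariance along a.e. path -/
lemma cov_path (hW : IsBMLaw W) (hL : Dis W L) (r : ℝ) :
    ∀ᵐ s : ℝ, ∀ᵐ v ∂W, L (th (-(s + r)) v) = (L (th (-s) v)).map (fun x => x + r) := by
  filter_upwards [qmp hW (dis_cov hW hL (-r))] with s hs
  filter_upwards [hs] with v hv
  rw [th_th] at hv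
  rw [show -(s + r) = -s + -r by ring, hv]
  simp

lemma Rf_cov (hW : IsBMLaw W) (hL : Dis W L) (σ r : ℝ) :
    ∀ᵐ s : ℝ, ∀ᵐ v ∂W, Rf L σ (s + r) v = Rf L σ s v := by
  filter_upwards [cov_path hW hL r] with s hs
  filter_upwards [hs] with v hv
  rw [Rf, hv, Measure.map_apply (by fun_prop) (measurableSet_le (by fun_prop) (by fun_prop)), Rf]
  congr 1
  ext x
  simp [mul_add]

lemma rec_bound [IsSFiniteKernel L] (hW : IsBMLaw W) (hL : Dis W L) (σ : ℝ) (a n : ℕ) {K : ℝ}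
    (hK : 0 < K) :
    ∫⁻ s in Ico 0 (n:ℝ), W {v | Rf L σ s v ≤ a}
      ≤ ENNReal.ofReal (2 * K) * a + ENNReal.ofReal (n * (n / K^2)) := by
  have := hW.prob
  set C : Set (Pth × ℝ) := {z | z.2 ∈ Ico 0 (n:ℝ) ∧ L z.1 {x | σ * z.2 ≤ σ * x} ≤ a} with hC
  have mC : MeasurableSet C := (measurable_snd measurableSet_Ico).inter
    (measurableSet_le (measurable_Rw L σ) measurable_const)
  set E : Set Pth := {w | K < |w.1 0|} with hE
  have mE : MeasurableSet E := measurableSet_lt measurable_const (measurable_evt _).abs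
  have h1 := hL (C.indicator 1) (measurable_one.indicator mC)
  have h2 : ∫⁻ s : ℝ, ∫⁻ v, C.indicator 1 (th (-s) v, s) ∂W
      = ∫⁻ s in Ico 0 (n:ℝ), W {v | Rf L σ s v ≤ a} := by
    rw [← lintegral_indicator measurableSet_Ico]
    refine lintegral_congr fun s => ?_
    have mm : MeasurableSet {v | Rf L σ s v ≤ a} :=
      measurableSet_le ((measurable_Rf L σ).comp measurable_prodMk_left) measurable_const
    by_cases hs : s ∈ Ico 0 (n:ℝ)
    · rw [indicator_of_mem hs, ← lintegral_indicator_one mm]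
      refine lintegral_congr fun v => ?_
      have : (th (-s) v, s) ∈ C ↔ v ∈ {v | Rf L σ s v ≤ a} := by
        simp only [hC, mem_ofPred_eq, hs, true_and, Rf]
      by_cases hv : v ∈ {v | Rf L σ s v ≤ a}
      · rw [indicator_of_mem hv, indicator_of_mem (this.2 hv)]; rfl
      · rw [indicator_of_notMem hv, indicator_of_notMem (fun h => hv (this.1 h))]
    · rw [indicator_of_notMem hs]
      have : ∀ v, C.indicator (1 : Pth × ℝ → ℝ≥0∞) (th (-s) v, s) = 0 := fun v =>
        indicator_of_notMem (fun h => hs h.1) _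
      simp [this]
  rw [← h2, ← h1]
  have h3 : ∀ᵐ w ∂(muM W), ∫⁻ s, C.indicator 1 (w, s) ∂(L w)
      ≤ Eᶜ.indicator (fun _ => (a:ℝ≥0∞)) w + E.indicator (fun w => L w (Ico 0 (n:ℝ))) w := by
    filter_upwards [dis_locfin hW hL] with w hw
    have : ∫⁻ s, C.indicator 1 (w, s) ∂(L w) = L w (Prod.mk w ⁻¹' C) :=
      lintegral_indicator_one (μ := L w) (measurable_prodMk_left mC)
    rw [this]
    by_cases hwE : w ∈ E
    · simp only [hwE, mem_compl_iff, not_true_eq_false, not_false_eq_true, indicator_of_notMem,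
        indicator_of_mem, zero_add]
      exact measure_mono fun s hs => hs.1
    · simp only [hwE, mem_compl_iff, not_false_eq_true, indicator_of_notMem,
        indicator_of_mem, add_zero]
      exact det_bound σ n a (measurableSet_le ((measurable_Rw L σ).comp measurable_prodMk_left)
        measurable_const)
  refine (lintegral_mono_ae h3).trans ?_
  rw [lintegral_add_left (measurable_const.indicator mE.compl), lintegral_indicator mE.compl,
    lintegral_indicator mE, setLIntegral_const, dis_set hL mE measurableSet_Ico]
  have hEc : Eᶜ = {w : Pth | |w.1 0| ≤ K} := by ext w; simp [hE]
  rw [hEc, muM_box hW, mul_comm]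
  refine add_le_add le_rfl ?_
  calc ∫⁻ s in Ico 0 (n:ℝ), W (th (-s) ⁻¹' E) ≤ ∫⁻ s in Ico 0 (n:ℝ), ENNReal.ofReal (n / K^2) := by
        refine setLIntegral_mono measurable_const fun s hs => ?_
        have : th (-s) ⁻¹' E = {v | K < |v.1 (-s)|} := by ext v; simp [hE]
        rw [this]
        refine (tail_neg hW hs.1 hK).trans (ENNReal.ofReal_le_ofReal ?_)
        gcongr
        exact hs.2.le
    _ ≤ _ := by
        rw [setLIntegral_const, Real.volume_Ico, mul_comm, ← ENNReal.ofReal_mul (by simp), sub_zero]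

lemma recur [IsSFiniteKernel L] (hW : IsBMLaw W) (hL : Dis W L) (σ : ℝ) :
    ∀ᵐ s : ℝ, ∀ᵐ v ∂W, Rf L σ s v = ∞ := by
  have := hW.prob
  have mg : ∀ a : ℕ, Measurable (fun s => W {v | Rf L σ s v ≤ a}) := fun a =>
    measurable_measure_prodMk_left (measurableSet_le (measurable_Rf L σ) measurable_const)
  have hper : ∀ (a : ℕ) (r : ℝ), ∀ᵐ s : ℝ, W {v | Rf L σ (s + r) v ≤ a} = W {v | Rf L σ s v ≤ a} := by
    intro a r
    filter_upwards [Rf_cov hW hL σ r] with s hs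
    refine measure_congr ?_
    filter_upwards [hs] with v hv
    simp only [eq_iff_iff]
    change _ ≤ _ ↔ _ ≤ _
    rw [hv]
  have hIntg : ∀ (a : ℕ) (r : ℝ), ∫⁻ s in Ico r (r+1), W {v | Rf L σ s v ≤ a}
      = ∫⁻ s in Ico 0 1, W {v | Rf L σ s v ≤ a} := by
    intro a r
    rw [← (measurePreserving_add_right volume r).setLIntegral_comp_preimage measurableSet_Ico (mg a)]
    have : (fun x : ℝ => x + r) ⁻¹' (Ico r (r+1)) = Ico 0 1 := by
      ext x; simp [add_comm]
    rw [this]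
    exact lintegral_congr_ae (ae_restrict_of_ae (hper a r))
  have hsum : ∀ (a n : ℕ), ∫⁻ s in Ico 0 (n:ℝ), W {v | Rf L σ s v ≤ a}
      = n * ∫⁻ s in Ico 0 1, W {v | Rf L σ s v ≤ a} := by
    intro a n
    induction n with
    | zero => simp
    | succ n ih =>
      have hu : Ico (0:ℝ) ((n+1 : ℕ):ℝ) = Ico 0 (n:ℝ) ∪ Ico (n:ℝ) (n+1) := by
        rw [Ico_union_Ico_eq_Ico (by positivity) (by linarith)]; push_cast; rfl
      rw [hu, lintegral_union measurableSet_Ico, ih, hIntg, Nat.cast_succ, add_mul, one_mul]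
      exact Ico_disjoint_Ico_same
  have hz : ∀ a : ℕ, ∫⁻ s in Ico (0:ℝ) 1, W {v | Rf L σ s v ≤ a} = 0 := by
    intro a
    set M := ∫⁻ s in Ico (0:ℝ) 1, W {v | Rf L σ s v ≤ a} with hM
    have hMfin : M ≠ ∞ := by
      have : M ≤ ∫⁻ s in Ico (0:ℝ) 1, 1 := lintegral_mono fun s => prob_le_one
      refine ne_top_of_le_ne_top ?_ this
      simp
    have hb : ∀ j : ℕ, M.toReal ≤ (2 * a + 1) / ((j:ℝ) + 1) := by
      intro j
      have hj : (0:ℝ) < (j:ℝ) + 1 := by positivity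
      have h := rec_bound hW hL σ a ((j+1)^4) (K := ((j:ℝ)+1)^3) (by positivity)
      rw [hsum, ← hM, ← ENNReal.ofReal_natCast a, ← ENNReal.ofReal_mul (by positivity),
        ← ENNReal.ofReal_add (by positivity) (by positivity)] at h
      have h' := ENNReal.toReal_mono (by simp) h
      rw [ENNReal.toReal_mul, ENNReal.toReal_ofReal (by positivity)] at h'
      simp only [ENNReal.toReal_natCast] at h'
      push_cast at h'
      have e : ((j:ℝ)+1)^4 * (((j:ℝ)+1)^4 / (((j:ℝ)+1)^3)^2) = ((j:ℝ)+1)^2 := by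
        field_simp
      rw [e] at h'
      rw [le_div_iff₀ hj]
      have h1 : ((j:ℝ)+1)^2 ≤ ((j:ℝ)+1)^3 := pow_le_pow_right₀ (by linarith) (by norm_num)
      have h3 : ((j:ℝ)+1)^3 * (M.toReal * (j+1)) ≤ ((j:ℝ)+1)^3 * (2 * a + 1) := by
        nlinarith
      exact le_of_mul_le_mul_left h3 (by positivity)
    have hlim : Tendsto (fun j : ℕ => (2 * (a:ℝ) + 1) / ((j:ℝ) + 1)) atTop (𝓝 0) := by
      have := (tendsto_one_div_add_atTop_nhds_zero_nat (𝕜 := ℝ)).const_mul (2 * (a:ℝ) + 1)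
      simpa [div_eq_mul_inv] using this
    have : M.toReal = 0 := le_antisymm (ge_of_tendsto' hlim hb) ENNReal.toReal_nonneg
    exact (ENNReal.toReal_eq_zero_iff _).1 this |>.resolve_right hMfin
  have hall : ∀ᵐ s : ℝ, ∀ (a : ℕ) (k : ℤ), s ∈ Ico (k:ℝ) (k+1) → W {v | Rf L σ s v ≤ a} = 0 := by
    refine ae_all_iff.2 fun a => ae_all_iff.2 fun k => (ae_restrict_iff' measurableSet_Ico).1 ?_
    exact (lintegral_eq_zero_iff (mg a)).1 ((hIntg a k).trans (hz a))
  filter_upwards [hall] with s hs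
  have : ∀ᵐ v ∂W, ∀ a : ℕ, ¬ Rf L σ s v ≤ a := by
    refine ae_all_iff.2 fun a => ?_
    rw [ae_iff]
    simpa using hs a ⌊s⌋ ⟨Int.floor_le s, Int.lt_floor_add_one s⟩
  filter_upwards [this] with v hv
  exact ENNReal.eq_top_of_forall_nnreal_le fun r => by
    obtain ⟨a, ha⟩ := exists_nat_ge r
    have := hv a
    push Not at this
    refine le_trans ?_ this.le
    exact_mod_cast ha

end recurrence


/-- first time after `s` at which one unit of mass has been accumulated -/
noncomputable def Nx (m : Measure ℝ) (s : ℝ) : ℝ := sInf {t | 1 ≤ m (Ioc s t)}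

lemma Nx_bdd (m : Measure ℝ) (s : ℝ) : BddBelow {t | 1 ≤ m (Ioc s t)} := by
  refine ⟨s, fun t (ht : 1 ≤ m (Ioc s t)) => ?_⟩
  by_contra h
  rw [Ioc_eq_empty (by linarith)] at ht
  simp at ht

lemma Nx_up (m : Measure ℝ) (s : ℝ) {t u : ℝ} (h : 1 ≤ m (Ioc s t)) (htu : t ≤ u) :
    1 ≤ m (Ioc s u) := h.trans (measure_mono (Ioc_subset_Ioc_right htu))

/-- measure with infinite mass at both ends, no atoms, locally finite -/
structure Good (m : Measure ℝ) : Prop where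
  lf : IsLocallyFiniteMeasure m
  na : NullSingletonClass m
  top : ∃ a, m (Ici a) = ∞
  bot : ∃ a, m (Iic a) = ∞

lemma Good.exA {m : Measure ℝ} (h : Good m) : ∃ A : ℝ → ℝ, Continuous A ∧ Monotone A ∧
    Function.Surjective A ∧ ∀ s t, m (Ioc s t) = ENNReal.ofReal (A t - A s) := by
  have := h.lf
  have := h.na
  set A : ℝ → ℝ := fun t => ∫ x in (0:ℝ)..t, (1:ℝ) ∂m with hA
  have hii : ∀ a b : ℝ, IntervalIntegrable (fun _ => (1:ℝ)) m a b := fun a b =>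
    intervalIntegrable_const
  have hc : Continuous A := intervalIntegral.continuous_primitive hii 0
  have hd : ∀ s t, s ≤ t → A t - A s = (m (Ioc s t)).toReal := by
    intro s t hst
    rw [hA]
    simp only
    rw [intervalIntegral.integral_interval_sub_left (hii _ _) (hii _ _),
      intervalIntegral.integral_of_le hst]
    simp [Measure.real]
  have hm : Monotone A := fun s t hst => by
    have := hd s t hst
    have := ENNReal.toReal_nonneg (a := m (Ioc s t))
    linarith
  have he : ∀ s t, m (Ioc s t) = ENNReal.ofReal (A t - A s) := by
    intro s t
    rcases le_total s t with hst | hst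
    · rw [hd s t hst, ENNReal.ofReal_toReal measure_Ioc_lt_top.ne]
    · rw [Ioc_eq_empty (by linarith), ENNReal.ofReal_of_nonpos (by linarith [hm hst])]
      simp
  refine ⟨A, hc, hm, ?_, he⟩
  have hup : ∀ C, ∃ t, C ≤ A t := by
    intro C
    by_contra hcon
    push Not at hcon
    obtain ⟨a, ha⟩ := h.top
    have hu : Ici a = ⋃ n : ℕ, Ioc (a-1) n ∩ Ici a := by
      ext x
      simp only [mem_Ici, mem_iUnion, mem_inter_iff, mem_Ioc]
      constructor
      · intro hx
        obtain ⟨n, hn⟩ := exists_nat_ge x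
        exact ⟨n, ⟨by linarith, hn⟩, hx⟩
      · rintro ⟨n, h1, h2⟩; exact h2
    have hb : m (Ici a) ≤ ENNReal.ofReal (C - A (a-1)) := by
      rw [hu, Monotone.measure_iUnion]
      · refine iSup_le fun n => (measure_mono inter_subset_left).trans ?_
        rw [he]
        exact ENNReal.ofReal_le_ofReal (by linarith [hcon n])
      · intro i j hij
        refine inter_subset_inter_left _ (Ioc_subset_Ioc_right ?_)
        exact_mod_cast hij
    rw [ha] at hb
    simp at hb
  have hdn : ∀ C, ∃ t, A t ≤ C := by
    intro C
    by_contra hcon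
    push Not at hcon
    obtain ⟨a, ha⟩ := h.bot
    have hu : Iic a = ⋃ n : ℕ, Ioc (-(n:ℝ)) a := by
      ext x
      simp only [mem_Iic, mem_iUnion, mem_Ioc]
      constructor
      · intro hx
        obtain ⟨n, hn⟩ := exists_nat_gt (-x)
        exact ⟨n, by linarith, hx⟩
      · rintro ⟨n, h1, h2⟩; exact h2
    have hb : m (Iic a) ≤ ENNReal.ofReal (A a - C) := by
      rw [hu, Monotone.measure_iUnion]
      · refine iSup_le fun n => ?_
        rw [he]
        exact ENNReal.ofReal_le_ofReal (by linarith [hcon (-(n:ℝ))])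
      · intro i j hij
        refine Ioc_subset_Ioc_left ?_
        have : (i:ℝ) ≤ j := by exact_mod_cast hij
        linarith
    rw [ha] at hb
    simp at hb
  intro y
  exact mem_range_of_exists_le_of_exists_ge hc (hdn y) (hup y)

lemma Nx_iff {m : Measure ℝ} {A : ℝ → ℝ} (hc : Continuous A) (hm : Monotone A)
    (hs : Function.Surjective A) (he : ∀ s t, m (Ioc s t) = ENNReal.ofReal (A t - A s)) (s t : ℝ) :
    Nx m s ≤ t ↔ A s + 1 ≤ A t := by
  have hset : {t | 1 ≤ m (Ioc s t)} = {t | A s + 1 ≤ A t} := by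
    ext t
    change 1 ≤ m (Ioc s t) ↔ A s + 1 ≤ A t
    rw [he, ENNReal.one_le_ofReal]
    constructor <;> intro h <;> linarith
  have hb := Nx_bdd m s
  have hcl : IsClosed {t | A s + 1 ≤ A t} := isClosed_le continuous_const hc
  have hne : {t | A s + 1 ≤ A t}.Nonempty := by
    obtain ⟨t, ht⟩ := hs (A s + 1)
    exact ⟨t, ht.ge⟩
  rw [hset] at hb
  have hmem : A s + 1 ≤ A (Nx m s) := by
    have h1 : A s + 1 ≤ A (sInf {t | A s + 1 ≤ A t}) := hcl.csInf_mem hne hb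
    unfold Nx
    rw [hset]
    exact h1
  constructor
  · intro h; exact hmem.trans (hm h)
  · intro h
    unfold Nx
    rw [hset]
    exact csInf_le hb h

lemma Good.lt_Nx {m : Measure ℝ} (h : Good m) (s : ℝ) : s < Nx m s := by
  obtain ⟨A, hc, hm, hs, he⟩ := h.exA
  by_contra hcon
  have := (Nx_iff hc hm hs he s s).1 (not_lt.1 hcon)
  linarith

lemma Good.nonempty {m : Measure ℝ} (h : Good m) (s : ℝ) : {t | 1 ≤ m (Ioc s t)}.Nonempty := by
  obtain ⟨A, hc, hm, hs, he⟩ := h.exA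
  obtain ⟨t, ht⟩ := hs (A s + 1)
  refine ⟨t, ?_⟩
  change 1 ≤ m (Ioc s t)
  rw [he, ENNReal.one_le_ofReal]
  linarith

lemma Good.Nx_map_add {m : Measure ℝ} (h : Good m) (s r : ℝ) :
    Nx (m.map (fun x => x + r)) (s + r) = Nx m s + r := by
  have := (OrderIso.addRight r).map_csInf' (h.nonempty s) (Nx_bdd m s)
  change Nx m s + r = _ at this
  rw [this, Nx]
  congr 1
  ext t
  simp only [mem_ofPred_eq, mem_image, OrderIso.addRight_apply]
  rw [Measure.map_apply (by fun_prop) measurableSet_Ioc]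
  have hp : ∀ t, (fun x : ℝ => x + r) ⁻¹' (Ioc (s + r) t) = Ioc s (t - r) := by
    intro t; ext x; simp [le_sub_iff_add_le]
  rw [hp]
  constructor
  · intro h; exact ⟨t - r, h, by ring⟩
  · rintro ⟨x, hx, rfl⟩; simpa using hx

lemma Good.map_Nx {m : Measure ℝ} (h : Good m) : Measurable (Nx m) ∧ m.map (Nx m) = m := by
  have := h.lf
  obtain ⟨A, hc, hm, hs, he⟩ := h.exA
  have hN := Nx_iff hc hm hs he
  have mono : Monotone (Nx m) := fun s t hst => by
    rw [hN]
    have := (hN t (Nx m t)).1 le_rfl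
    linarith [hm hst]
  refine ⟨mono.measurable, ?_⟩
  symm
  have lev : ∀ α : ℝ, ∃ x, A x = α ∧ ∀ s, A s ≤ α ↔ s ≤ x := by
    intro α
    obtain ⟨x0, hx0⟩ := hs α
    obtain ⟨x1, hx1⟩ := hs (α + 1)
    have hb : BddAbove {s | A s ≤ α} := ⟨x1, fun s (hs : A s ≤ α) => by
      by_contra hcon
      have := hm (not_le.1 hcon).le
      linarith⟩
    have hcl : IsClosed {s | A s ≤ α} := isClosed_le hc continuous_const
    have hmem : A (sSup {s | A s ≤ α}) ≤ α := hcl.csSup_mem ⟨x0, hx0.le⟩ hb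
    have hle : x0 ≤ sSup {s | A s ≤ α} := le_csSup hb hx0.le
    refine ⟨sSup {s | A s ≤ α}, le_antisymm hmem (hx0.ge.trans (hm hle)), fun s => ⟨fun h => le_csSup hb h,
      fun h => (hm h).trans hmem⟩⟩
  refine Measure.ext_of_Ioc _ _ fun a b hab => ?_
  rw [Measure.map_apply mono.measurable measurableSet_Ioc]
  obtain ⟨x, hx, hx'⟩ := lev (A b - 1)
  obtain ⟨y, hy, hy'⟩ := lev (A a - 1)
  have hpre : Nx m ⁻¹' (Ioc a b) = Ioc y x := by
    ext s
    have h1 : Nx m s ≤ a ↔ s ≤ y := by rw [hN, ← hy', le_sub_iff_add_le]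
    have h2 : Nx m s ≤ b ↔ s ≤ x := by rw [hN, ← hx', le_sub_iff_add_le]
    rw [mem_preimage, mem_Ioc, mem_Ioc, ← not_le, h1, h2, not_le]
  rw [hpre, he, he, hx, hy]
  congr 1
  ring

lemma measurable_Nx (L : Kernel Pth ℝ) [IsSFiniteKernel L] :
    Measurable (fun z : Pth × ℝ => Nx (L z.1) z.2) := by
  have hq : ∀ q : ℝ, MeasurableSet {z : Pth × ℝ | 1 ≤ L z.1 (Ioc z.2 q)} := fun q =>
    measurableSet_le measurable_const (measurable_Lset L (T := {y | y.2 ∈ Ioc y.1 q})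
      ((measurableSet_lt measurable_fst measurable_snd).inter
        (measurableSet_le measurable_snd measurable_const)))
  have hE : MeasurableSet {z : Pth × ℝ | ∃ n : ℕ, 1 ≤ L z.1 (Ioc z.2 n)} := by
    have : {z : Pth × ℝ | ∃ n : ℕ, 1 ≤ L z.1 (Ioc z.2 n)}
        = ⋃ n : ℕ, {z : Pth × ℝ | 1 ≤ L z.1 (Ioc z.2 (n:ℝ))} := by ext; simp
    rw [this]
    exact MeasurableSet.iUnion fun n => hq n
  refine measurable_of_Iio fun t => ?_
  have hQ : MeasurableSet {z : Pth × ℝ | ∃ q : ℚ, (q:ℝ) < t ∧ 1 ≤ L z.1 (Ioc z.2 q)} := by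
    have : {z : Pth × ℝ | ∃ q : ℚ, (q:ℝ) < t ∧ 1 ≤ L z.1 (Ioc z.2 q)}
        = ⋃ q : ℚ, ({z : Pth × ℝ | (q:ℝ) < t} ∩ {z : Pth × ℝ | 1 ≤ L z.1 (Ioc z.2 (q:ℝ))}) := by
      ext; simp
    rw [this]
    exact MeasurableSet.iUnion fun q => (MeasurableSet.const _).inter (hq q)
  have : (fun z : Pth × ℝ => Nx (L z.1) z.2) ⁻¹' Iio t
      = ({z : Pth × ℝ | ∃ n : ℕ, 1 ≤ L z.1 (Ioc z.2 n)}
          ∩ {z : Pth × ℝ | ∃ q : ℚ, (q:ℝ) < t ∧ 1 ≤ L z.1 (Ioc z.2 q)})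
        ∪ ({z : Pth × ℝ | ∃ n : ℕ, 1 ≤ L z.1 (Ioc z.2 n)}ᶜ ∩ {z : Pth × ℝ | 0 < t}) := by
    ext z
    by_cases hz : ∃ n : ℕ, 1 ≤ L z.1 (Ioc z.2 n)
    · have hne : {t | 1 ≤ L z.1 (Ioc z.2 t)}.Nonempty := ⟨hz.choose, hz.choose_spec⟩
      have h1 : Nx (L z.1) z.2 < t ↔ ∃ q : ℚ, (q:ℝ) < t ∧ 1 ≤ L z.1 (Ioc z.2 q) := by
        unfold Nx
        rw [csInf_lt_iff (Nx_bdd _ _) hne]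
        constructor
        · rintro ⟨x, hx, hxt⟩
          obtain ⟨q, hq1, hq2⟩ := exists_rat_btwn hxt
          exact ⟨q, hq2, Nx_up _ _ hx hq1.le⟩
        · rintro ⟨q, hq1, hq2⟩
          exact ⟨q, hq2, hq1⟩
      simp [h1, hz]
    · have hemp : {t | 1 ≤ L z.1 (Ioc z.2 t)} = ∅ := by
        refine eq_empty_of_forall_notMem fun x hx => hz ?_
        obtain ⟨n, hn⟩ := exists_nat_ge x
        exact ⟨n, Nx_up _ _ hx hn⟩
      have h1 : Nx (L z.1) z.2 = 0 := by rw [Nx, hemp, Real.sInf_empty]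
      simp only [mem_preimage, h1, mem_Iio, mem_union, mem_inter_iff, mem_ofPred_eq, hz, false_and,
        mem_compl_iff, not_false_eq_true, true_and, false_or]
  rw [this]
  exact (hE.inter hQ).union (hE.compl.inter (MeasurableSet.const _))


section core
variable {W : Measure Pth} {L : Kernel Pth ℝ}

lemma set_one (s : ℝ) : {x : ℝ | 1 * s ≤ 1 * x} = Ici s := by ext x; simp
lemma set_neg_one (s : ℝ) : {x : ℝ | (-1) * s ≤ (-1) * x} = Iic s := by ext x; simp

lemma good_path [IsSFiniteKernel L] (hW : IsBMLaw W) (hL : Dis W L) :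
    ∀ᵐ s : ℝ, ∀ᵐ v ∂W, Good (L (th (-s) v)) := by
  filter_upwards [qmp hW (dis_locfin hW hL), qmp hW (dis_noatom hW hL), recur hW hL 1,
    recur hW hL (-1)] with s h1 h2 h3 h4
  filter_upwards [h1, h2, h3, h4] with v g1 g2 g3 g4
  rw [Rf, set_one] at g3
  rw [Rf, set_neg_one] at g4
  exact ⟨g1, g2, ⟨s, g3⟩, ⟨s, g4⟩⟩

lemma good_or_zero [IsSFiniteKernel L] (hW : IsBMLaw W) (hL : Dis W L) :
    ∀ᵐ w ∂(muM W), Good (L w) ∨ L w = 0 := by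
  have := hW.prob
  set C : Set (Pth × ℝ) := {z | L z.1 {x | 1 * z.2 ≤ 1 * x} ≠ ∞} ∪
    {z | L z.1 {x | (-1) * z.2 ≤ (-1) * x} ≠ ∞} with hC
  have mC : MeasurableSet C :=
    ((measurable_Rw L 1) (measurableSet_singleton ∞).compl).union
      ((measurable_Rw L (-1)) (measurableSet_singleton ∞).compl)
  have h1 := hL (C.indicator 1) (measurable_one.indicator mC)
  have h2 : ∫⁻ s : ℝ, ∫⁻ v, C.indicator 1 (th (-s) v, s) ∂W = 0 := by
    rw [lintegral_congr_ae (g := fun _ => 0)]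
    · simp
    filter_upwards [recur hW hL 1, recur hW hL (-1)] with s h3 h4
    rw [lintegral_congr_ae (g := fun _ => 0)]
    · simp
    filter_upwards [h3, h4] with v g3 g4
    refine indicator_of_notMem ?_ _
    rintro (h | h)
    · exact h g3
    · exact h g4
  rw [h2] at h1
  have e : ∀ w, ∫⁻ s, C.indicator 1 (w, s) ∂(L w) = L w (Prod.mk w ⁻¹' C) := fun w =>
    lintegral_indicator_one (μ := L w) (measurable_prodMk_left mC)
  simp_rw [e] at h1
  rw [lintegral_eq_zero_iff (Kernel.measurable_kernel_prodMk_left mC)] at h1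
  filter_upwards [h1, dis_locfin hW hL, dis_noatom hW hL] with w hw g1 g2
  by_cases h0 : L w = 0
  · exact Or.inr h0
  left
  have hw' : L w (Prod.mk w ⁻¹' C) = 0 := hw
  have : ∃ s, s ∉ Prod.mk w ⁻¹' C := by
    by_contra hcon
    push Not at hcon
    rw [eq_univ_of_forall hcon] at hw'
    exact h0 (Measure.measure_univ_eq_zero.1 hw')
  obtain ⟨s, hs⟩ := this
  simp only [hC, mem_preimage, mem_union, not_or] at hs
  have g3 : L w {x | 1 * s ≤ 1 * x} = ∞ := by
    by_contra hcon; exact hs.1 hcon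
  have g4 : L w {x | (-1) * s ≤ (-1) * x} = ∞ := by
    by_contra hcon; exact hs.2 hcon
  rw [set_one] at g3
  rw [set_neg_one] at g4
  exact ⟨g1, g2, ⟨s, g3⟩, ⟨s, g4⟩⟩

lemma inv_Nx [IsSFiniteKernel L] (hW : IsBMLaw W) (hL : Dis W L) {G : Pth × ℝ → ℝ≥0∞}
    (hG : Measurable G) :
    ∫⁻ s : ℝ, ∫⁻ v, G (th (-s) v, Nx (L (th (-s) v)) s) ∂W = ∫⁻ s : ℝ, ∫⁻ v, G (th (-s) v, s) ∂W := by
  have mG : Measurable (fun z : Pth × ℝ => G (z.1, Nx (L z.1) z.2)) :=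
    hG.comp (measurable_fst.prodMk (measurable_Nx L))
  rw [← hL G hG, ← hL (fun z => G (z.1, Nx (L z.1) z.2)) mG]
  refine lintegral_congr_ae ?_
  filter_upwards [good_or_zero hW hL] with w hw
  rcases hw with hw | hw
  · obtain ⟨h1, h2⟩ := hw.map_Nx
    conv_rhs => rw [← h2]
    rw [lintegral_map (f := fun s => G (w, s)) (hG.comp measurable_prodMk_left) h1]
  · simp [hw]

/-- waiting time -/
noncomputable def wt (L : Kernel Pth ℝ) (s : ℝ) (v : Pth) : ℝ := Nx (L (th (-s) v)) s - s

lemma measurable_wt [IsSFiniteKernel L] : Measurable (fun z : ℝ × Pth => wt L z.1 z.2) :=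
  ((measurable_Nx L).comp (measurable_thneg.prodMk measurable_fst)).sub measurable_fst

lemma measurable_wtc [IsSFiniteKernel L] (s : ℝ) : Measurable (fun v : Pth => wt L s v) := by
  have h : Measurable (fun v : Pth => (th (-s) v, s)) := (measurable_thc (-s)).prodMk measurable_const
  have h2 : Measurable (fun v : Pth => Nx (L (th (-s) v)) s) :=
    Measurable.comp (g := fun z : Pth × ℝ => Nx (L z.1) z.2) (f := fun v : Pth => (th (-s) v, s))
      (measurable_Nx L) h
  exact h2.sub_const s

lemma wt_cov [IsSFiniteKernel L] (hW : IsBMLaw W) (hL : Dis W L) (r : ℝ) :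
    ∀ᵐ s : ℝ, ∀ᵐ v ∂W, wt L (s + r) v = wt L s v := by
  filter_upwards [good_path hW hL, cov_path hW hL r] with s h1 h2
  filter_upwards [h1, h2] with v g1 g2
  rw [wt, g2, g1.Nx_map_add, wt]
  ring

lemma exists_s0 [IsSFiniteKernel L] (hW : IsBMLaw W) (hL : Dis W L) :
    ∃ s0 : ℝ, (∀ᵐ s : ℝ, ∀ᵐ v ∂W, wt L s v = wt L s0 v) ∧ ∀ᵐ v ∂W, 0 < wt L s0 v := by
  have := hW.prob
  have mS : MeasurableSet {x : ℝ × ℝ | ∀ᵐ v ∂W, wt L (x.2 + x.1) v = wt L x.2 v} := by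
    have m1 : MeasurableSet {z : (ℝ × ℝ) × Pth | wt L (z.1.2 + z.1.1) z.2 ≠ wt L z.1.2 z.2} := by
      refine (measurableSet_eq_fun ?_ ?_).compl
      · exact measurable_wt.comp (f := fun z : (ℝ × ℝ) × Pth => (z.1.2 + z.1.1, z.2)) (by fun_prop)
      · exact measurable_wt.comp (f := fun z : (ℝ × ℝ) × Pth => (z.1.2, z.2)) (by fun_prop)
    exact (measurable_measure_prodMk_left (ν := W) m1) (measurableSet_singleton 0)
  have h1 : ∀ᵐ r : ℝ, ∀ᵐ s : ℝ, ∀ᵐ v ∂W, wt L (s + r) v = wt L s v :=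
    Eventually.of_forall fun r => wt_cov hW hL r
  rw [Measure.ae_ae_comm mS] at h1
  obtain ⟨s0, h2, h3⟩ := (h1.and (good_path hW hL)).exists
  refine ⟨s0, ?_, ?_⟩
  · have h4 := (measurePreserving_add_right volume (-s0)).quasiMeasurePreserving.ae h2
    filter_upwards [h4] with s hs
    simpa using hs
  · filter_upwards [h3] with v hv
    have := hv.lt_Nx s0
    rw [wt]; linarith

theorem core (hW : IsBMLaw W) : ∃ τ : Pth → ℝ, Measurable τ ∧ (∀ w, 0 ≤ τ w) ∧
    (∀ᵐ w ∂W, 0 < τ w) ∧ MeasurePreserving (fun w => th (τ w) w) W W := by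
  have := hW.prob
  obtain ⟨L, hLs, hL⟩ := exists_dis hW
  obtain ⟨s0, h1, h2⟩ := exists_s0 hW hL
  set τ : Pth → ℝ := fun v => max 0 (wt L s0 v) with hτ
  have mτ : Measurable τ := measurable_const.max (measurable_wtc s0)
  have mS : Measurable (fun w => th (τ w) w) := measurable_th_comp measurable_id mτ
  refine ⟨τ, mτ, fun w => le_max_left _ _, ?_, mS, ?_⟩
  · filter_upwards [h2] with v hv
    exact lt_max_of_lt_right hv
  refine Measure.ext_of_lintegral _ fun h hh => ?_
  rw [lintegral_map hh mS]
  set I : ℝ → ℝ≥0∞ := (Ico (0:ℝ) 1).indicator 1 with hI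
  have mI : Measurable I := measurable_one.indicator measurableSet_Ico
  have hI1 : ∀ c : ℝ, ∫⁻ s : ℝ, I (s + c) = 1 := fun c => by
    rw [lintegral_add_right_eq_self I c, hI, lintegral_indicator_one measurableSet_Ico]; simp
  set G : Pth × ℝ → ℝ≥0∞ := fun z => I z.2 * h (th z.2 z.1) with hG
  have mG : Measurable G := (mI.comp measurable_snd).mul
    (hh.comp (measurable_th_comp measurable_fst measurable_snd))
  have e1 : ∫⁻ v, h (th (τ v) v) ∂W = ∫⁻ v, (∫⁻ s : ℝ, I (s + τ v) * h (th (τ v) v)) ∂W := by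
    refine lintegral_congr fun v => ?_
    rw [lintegral_mul_const (f := fun s : ℝ => I (s + τ v)) _ (mI.comp (by fun_prop)), hI1, one_mul]
  rw [e1, lintegral_lintegral_swap (f := fun (v : Pth) (s : ℝ) => I (s + τ v) * h (th (τ v) v))]
  swap
  · exact ((mI.comp (f := fun z : Pth × ℝ => z.2 + τ z.1)
      (measurable_snd.add (mτ.comp measurable_fst))).mul
      ((hh.comp mS).comp measurable_fst)).aemeasurable
  have e2 : ∫⁻ s : ℝ, ∫⁻ v, I (s + τ v) * h (th (τ v) v) ∂W
      = ∫⁻ s : ℝ, ∫⁻ v, G (th (-s) v, Nx (L (th (-s) v)) s) ∂W := by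
    refine lintegral_congr_ae ?_
    filter_upwards [h1] with s hs
    refine lintegral_congr_ae ?_
    filter_upwards [hs, h2] with v hv hp
    have : Nx (L (th (-s) v)) s = s + τ v := by
      rw [hτ]
      simp only
      rw [max_eq_right hp.le, ← hv, wt]; ring
    rw [this, hG]
    simp only [th_th]
    rw [show -s + (s + τ v) = τ v by ring]
  rw [e2, inv_Nx hW hL mG]
  simp only [hG, th_th, neg_add_cancel, th_zero]
  have e3 : ∀ s : ℝ, ∫⁻ v, I s * h v ∂W = I s * ∫⁻ v, h v ∂W := fun s =>
    lintegral_const_mul _ hh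
  simp_rw [e3]
  rw [lintegral_mul_const _ mI]
  have := hI1 0
  simp only [add_zero] at this
  rw [this, one_mul]

end core


lemma quantile {γ : Measure ℝ} [IsProbabilityMeasure γ] [NullSingletonClass γ] {q : ℝ}
    (hq : q ∈ Icc (0:ℝ) 1) : ∃ D : Set ℝ, MeasurableSet D ∧ γ D = ENNReal.ofReal q := by
  rcases hq.1.eq_or_lt with h0 | h0
  · exact ⟨∅, MeasurableSet.empty, by simp [← h0]⟩
  rcases hq.2.eq_or_lt with h1 | h1
  · exact ⟨univ, MeasurableSet.univ, by simp [h1]⟩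
  have hc : Continuous (cdf γ) := by
    rw [continuous_iff_continuousAt]
    intro x
    rw [(monotone_cdf γ).continuousAt_iff_leftLim_eq_rightLim, StieltjesFunction.rightLim_eq]
    have h := StieltjesFunction.measure_singleton (cdf γ) x
    rw [measure_cdf, measure_singleton] at h
    have h' := ENNReal.ofReal_eq_zero.1 h.symm
    exact le_antisymm ((monotone_cdf γ).leftLim_le le_rfl) (by linarith)
  obtain ⟨a, ha⟩ := ((tendsto_cdf_atBot γ).eventually (ge_mem_nhds h0)).exists
  obtain ⟨b, hb⟩ := ((tendsto_cdf_atTop γ).eventually (le_mem_nhds h1)).exists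
  obtain ⟨x, hx⟩ := mem_range_of_exists_le_of_exists_ge hc ⟨a, ha⟩ ⟨b, hb⟩
  exact ⟨Iic x, measurableSet_Iic, by rw [← ofReal_cdf, hx]⟩

theorem core2 {W : Measure Pth} (hW : IsBMLaw W) {p : ℝ} (hp : p ∈ Icc (0:ℝ) 1) :
    ∃ τ : Pth → ℝ, Measurable τ ∧ (∀ w, 0 ≤ τ w) ∧ W {w | τ w = 0} = ENNReal.ofReal p ∧
      MeasurePreserving (fun w => th (τ w) w) W W := by
  have := hW.prob
  obtain ⟨τ, mτ, hτ0, hτp, hS⟩ := core hW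
  set S : Pth → Pth := fun w => th (τ w) w with hSd
  have : NullSingletonClass (gaussianReal 0 1) := nullSingletonClass_gaussianReal one_ne_zero
  obtain ⟨D0, mD0, hD0⟩ := quantile (γ := gaussianReal 0 1) (q := 1 - p)
    ⟨by linarith [hp.2], by linarith [hp.1]⟩
  set D : Set Pth := (fun w : Pth => w.1 1) ⁻¹' D0 with hD
  have mD : MeasurableSet D := measurable_evt 1 mD0
  have hWD : W Dᶜ = ENNReal.ofReal p := by
    rw [prob_compl_eq_one_sub mD, hD, ← Measure.map_apply (measurable_evt 1) mD0,
      hW.gauss 1 zero_le_one, Real.toNNReal_one, hD0, ← ENNReal.ofReal_one,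
      ← ENNReal.ofReal_sub _ (by linarith [hp.2])]
    congr 1; ring
  set U : ℕ → Pth → ℝ := fun n w => ∑ j ∈ Finset.range n, τ (S^[j] w) with hU
  have mU : ∀ n, Measurable (U n) := fun n => Finset.measurable_sum _ fun j _ =>
    mτ.comp (hS.measurable.iterate j)
  have hit : ∀ n w, S^[n] w = th (U n w) w := by
    intro n w
    induction n with
    | zero => simp [hU, th_zero]
    | succ n ih =>
      rw [Function.iterate_succ_apply']
      have : U (n+1) w = U n w + τ (S^[n] w) := Finset.sum_range_succ _ _
      rw [this, ← th_th, ← ih]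
  have mr := measurable_retTime hS.measurable mD
  refine ⟨fun w => U (retTime S D w) w, ?_, fun w => Finset.sum_nonneg fun j _ => hτ0 _, ?_, ?_⟩
  · have h1 : Measurable (fun z : ℕ × Pth => U z.1 z.2) :=
      measurable_from_prod_countable_right fun n => mU n
    exact h1.comp (mr.prodMk measurable_id)
  · rw [← hWD]
    refine measure_congr ?_
    filter_upwards [retTime_pos hS mD, hτp] with w h1 h2
    rw [eq_iff_iff]
    change U (retTime S D w) w = 0 ↔ w ∉ D
    constructor
    · intro h hw
      have h3 : τ (S^[0] w) ≤ U (retTime S D w) w :=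
        Finset.single_le_sum (f := fun j => τ (S^[j] w)) (fun j _ => hτ0 _)
          (Finset.mem_range.2 (h1 hw))
      rw [Function.iterate_zero_apply] at h3
      linarith
    · intro hw
      have : retTime S D w = 0 := by simp [retTime, hw]
      simp [this, hU]
  · have := induced_measurePreserving hS mD
    simpa only [hit] using this

theorem main {Ω : Type*} [MeasurableSpace Ω]
    (P : Measure Ω) [IsProbabilityMeasure P]
    (B : ℝ → Ω → ℝ) (hB : IsTwoSidedBM P B)
    (p : ℝ) (hp : p ∈ Set.Icc (0 : ℝ) 1) :
    ∃ T : Ω → ℝ, (∀ ω, 0 ≤ T ω) ∧ IsUnbiasedShift P B T ∧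
      Embeds P B T (Measure.dirac 0) ∧ P {ω | T ω = 0} = ENNReal.ofReal p := by
  obtain ⟨π, hπ, hπB⟩ := exists_path hB
  have hW := isBMLaw_map hB hπ hπB
  obtain ⟨τ, mτ, hτ0, hτp, hS⟩ := core2 hW hp
  obtain ⟨h, mh, hh⟩ := Measurable.exists_eq_measurable_comp
    (f := (Subtype.val : Pth → ℝ → ℝ)) (g := τ) mτ
  set T : Ω → ℝ := fun ω => max 0 (h (fun t => B t ω)) with hT
  have hTτ : ∀ᵐ ω ∂P, T ω = τ (π ω) := by
    filter_upwards [hπB] with ω hω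
    have e : (π ω).1 = fun t => B t ω := funext hω
    have : τ (π ω) = h (fun t => B t ω) := by rw [hh, Function.comp_apply, e]
    rw [hT]
    simp only
    rw [← this, max_eq_right (hτ0 _)]
  have hz : ∀ᵐ ω ∂P, (π ω).1 (τ (π ω)) = 0 := by
    have h1 := hS.quasiMeasurePreserving.ae hW.zero
    have h2 := ae_of_ae_map hπ.aemeasurable h1
    filter_upwards [h2] with ω hω
    simpa using hω
  have hBT : ∀ᵐ ω ∂P, B (T ω) ω = 0 := by
    filter_upwards [hz, hTτ, hπB] with ω h1 h2 h3
    rw [h2, ← h3, h1]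
  refine ⟨T, fun ω => le_max_left _ _, ⟨?_, ?_, ?_⟩, ?_, ?_⟩
  · have mh' : Measurable (fun x : ℝ → ℝ => max 0 (h x)) := measurable_const.max mh
    exact mh'.comp (comap_measurable (fun ω (t : ℝ) => B t ω))
  · have mS : Measurable (fun ω => th (τ (π ω)) (π ω)) := measurable_th_comp hπ (mτ.comp hπ)
    refine isBM_transfer hB hπ mS hπB ?_ ?_
    · filter_upwards [hBT, hTτ, hπB] with ω h1 h2 h3 t
      rw [h1, sub_zero, h2, th_apply, h3]
    · have := hS.map_eq
      rwa [Measure.map_map hS.measurable hπ] at this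
  · refine (indepFun_const_right (μ := P) (fun ω (t : ℝ) => B (T ω + t) ω - B (T ω) ω)
      (0:ℝ)).congr (ae_eq_refl _) ?_
    filter_upwards [hBT] with ω hω
    exact hω.symm
  · unfold Embeds
    rw [Measure.map_congr (g := fun _ => (0:ℝ)) hBT, Measure.map_const]
    simp
  · have m0 : MeasurableSet {w | τ w = 0} := mτ (measurableSet_singleton 0)
    rw [← hτp, Measure.map_apply hπ m0]
    refine measure_congr ?_
    filter_upwards [hTτ] with ω hω
    rw [eq_iff_iff]
    change T ω = 0 ↔ τ (π ω) = 0
    rw [hω]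

end UShift
end UShiftProof

/-- for every `p ∈ [0,1]` there is a nonnegative unbiased shift `T` embedding
`δ₀` with `P₀{T = 0} = p`. -/
theorem exists_unbiased_shift_dirac_zero {Ω : Type*} [MeasurableSpace Ω]
    (P : Measure Ω) [IsProbabilityMeasure P]
    (B : ℝ → Ω → ℝ) (hB : IsTwoSidedBM P B)
    (p : ℝ) (hp : p ∈ Set.Icc (0 : ℝ) 1) :
    ∃ T : Ω → ℝ, (∀ ω, 0 ≤ T ω) ∧ IsUnbiasedShift P B T ∧
      Embeds P B T (Measure.dirac 0) ∧ P {ω | T ω = 0} = ENNReal.ofReal p := by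
  exact UShift.main P B hB p hp
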